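/- Under the hypotheses of the energy decay identity, if additionally γ₁ g(θ) - h²(θ) > 0 for all θ, then the energy E(t) is non-increasing in t; in particular E(t) ≤ E(0) for all t ≥ 0. -/

import Mathlib

/-- Partial derivative in the first (space) variable. -/
noncomputable def pdx (f : ℝ → ℝ → ℝ) (x t : ℝ) : ℝ := deriv (fun y => f y t) x

/-- Partial derivative in the second (time) variable. -/
noncomputable def pdt (f : ℝ → ℝ → ℝ) (x t : ℝ) : ℝ := deriv (fun s => f x s) t

open Set Filter Topology MeasureTheory

set_option maxHeartbeats 4000000 in
/-- Pointwise lower bound behind the Carleman inequality. -/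
lemma pointwise_bound {m K : ℝ} (hm : 0 < m) (hm1 : m ≤ 1) (hK : 1 ≤ K)
    {τ f1 f2 g gx gt k c cx σ h1 h2 p1 p2 q1 q2 q3 V Y P Q : ℝ}
    (hτ1 : 1 ≤ τ) (hτ : 60 * K ^ 4 + 1 ≤ τ * m ^ 4)
    (hσ : σ = 1 ∨ σ = -1)
    (hf1 : m ≤ f1) (hf2 : m ≤ f2) (hg : m ≤ g) (hconv : m ≤ 3 * g * f2 + 2 * gx * f1)
    (hk : m ≤ σ * k - |c|)
    (bf1 : |f1| ≤ K) (bf2 : |f2| ≤ K) (bg : |g| ≤ K) (bgx : |gx| ≤ K) (bgt : |gt| ≤ K)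
    (bk : |k| ≤ K) (bcx : |cx| ≤ K) (bh1 : |h1| ≤ K) (bh2 : |h2| ≤ K)
    (bp1 : |p1| ≤ K) (bp2 : |p2| ≤ K) (bq1 : |q1| ≤ K) (bq2 : |q2| ≤ K) (bq3 : |q3| ≤ K) :
    V ^ 2 + P ^ 2 + Q ^ 2 ≤
      2 * τ * f2 * g ^ 2 * Y ^ 2 + 2 * τ ^ 3 * g * f1 ^ 2 * (3 * g * f2 + 2 * gx * f1) * V ^ 2
      - gt * Y ^ 2 + τ ^ 2 * gt * f1 ^ 2 * V ^ 2
      - ((h1 * P + h2 * V) - k * Y + k * τ * f1 * V - gx * Y - τ * g * f2 * V) ^ 2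
      + 2 * τ * f1 * (σ * k * (P ^ 2 + Q ^ 2) - 2 * σ * c * P * Q)
      + σ * (2 * P * (p1 * P + p2 * V) + 2 * Q * (q1 * (Y - τ * f1 * V) + q2 * V + q3 * Q)
          - 2 * cx * P * Q) := by
  have hτ0 : 0 < τ := by linarith
  have hK0 : 0 < K := by linarith
  have hf1' : 0 < f1 := by linarith
  have hf2' : 0 < f2 := by linarith
  have hg' : 0 < g := by linarith
  have sσ : |σ| = 1 := by rcases hσ with h | h <;> simp [h]
  have sσ2 : σ ^ 2 = 1 := by rcases hσ with h | h <;> simp [h]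
  have prod : ∀ r z : ℝ, |r| ≤ K → 0 ≤ z → -(K * z) ≤ r * z := by
    intro r z hr hz
    have := (abs_le.1 hr).1
    nlinarith
  have cross : ∀ r x y : ℝ, |r| ≤ K → -(K * (x ^ 2 + y ^ 2)) ≤ 2 * r * x * y := by
    intro r x y hr
    obtain ⟨h1, h2⟩ := abs_le.1 hr
    nlinarith [mul_nonneg (sub_nonneg.2 h2) (sq_nonneg (x - y)),
      mul_nonneg (by linarith : 0 ≤ K + r) (sq_nonneg (x + y))]
  have sgn : ∀ r : ℝ, |r| ≤ K → |σ * r| ≤ K := by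
    intro r hr; rw [abs_mul, sσ, one_mul]; exact hr
  -- main terms
  have e1 : 2 * τ * m ^ 4 * Y ^ 2 ≤ 2 * τ * f2 * g ^ 2 * Y ^ 2 := by
    have : m ^ 4 ≤ f2 * g ^ 2 := by
      calc m ^ 4 ≤ m ^ 3 := pow_le_pow_of_le_one hm.le hm1 (by norm_num)
        _ = m * m ^ 2 := by ring
        _ ≤ f2 * g ^ 2 := by gcongr
    have : (2 * τ * Y ^ 2) * m ^ 4 ≤ (2 * τ * Y ^ 2) * (f2 * g ^ 2) := by gcongr
    linarith
  have e2 : 2 * τ ^ 3 * m ^ 4 * V ^ 2 ≤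
      2 * τ ^ 3 * g * f1 ^ 2 * (3 * g * f2 + 2 * gx * f1) * V ^ 2 := by
    have : m * m ^ 2 * m ≤ g * f1 ^ 2 * (3 * g * f2 + 2 * gx * f1) := by gcongr
    have : (2 * τ ^ 3 * V ^ 2) * (m * m ^ 2 * m) ≤
      (2 * τ ^ 3 * V ^ 2) * (g * f1 ^ 2 * (3 * g * f2 + 2 * gx * f1)) := by gcongr
    linarith
  have e3 : 2 * τ * m ^ 4 * (P ^ 2 + Q ^ 2) ≤
      2 * τ * f1 * (σ * k * (P ^ 2 + Q ^ 2) - 2 * σ * c * P * Q) := by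
    have h0 : m * (P ^ 2 + Q ^ 2) ≤ σ * k * (P ^ 2 + Q ^ 2) - 2 * σ * c * P * Q := by
      have h1 : σ * c ≤ |c| := by
        calc σ * c ≤ |σ * c| := le_abs_self _
          _ = |c| := by rw [abs_mul, sσ, one_mul]
      have h2 : -(σ * c) ≤ |c| := by
        calc -(σ * c) ≤ |σ * c| := neg_le_abs _
          _ = |c| := by rw [abs_mul, sσ, one_mul]
      have h3 := mul_le_mul_of_nonneg_right hk (by positivity : 0 ≤ P ^ 2 + Q ^ 2)
      nlinarith [mul_nonneg (sub_nonneg.2 h1) (sq_nonneg (P + Q)),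
        mul_nonneg (by linarith : 0 ≤ |c| + σ * c) (sq_nonneg (P - Q))]
    have h4 : m ^ 4 ≤ m * m := by
      calc m ^ 4 ≤ m ^ 2 := pow_le_pow_of_le_one hm.le hm1 (by norm_num)
        _ = m * m := by ring
    have h5 : f1 * (m * (P ^ 2 + Q ^ 2)) ≤
        f1 * (σ * k * (P ^ 2 + Q ^ 2) - 2 * σ * c * P * Q) := by gcongr
    have h6 : m * (m * (P ^ 2 + Q ^ 2)) ≤ f1 * (m * (P ^ 2 + Q ^ 2)) := by gcongr
    have h7 : m ^ 4 * (P ^ 2 + Q ^ 2) ≤ m * m * (P ^ 2 + Q ^ 2) := by gcongr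
    have h8 : m ^ 4 * (P ^ 2 + Q ^ 2) ≤
        f1 * (σ * k * (P ^ 2 + Q ^ 2) - 2 * σ * c * P * Q) := by linarith
    have := mul_le_mul_of_nonneg_left h8 (by positivity : 0 ≤ 2 * τ)
    linarith
  -- error terms
  have r1 : -(K * Y ^ 2) ≤ -gt * Y ^ 2 := prod (-gt) _ (by simpa using bgt) (sq_nonneg _)
  have f1sq : f1 ^ 2 ≤ K ^ 2 := by
    have : f1 ≤ K := (abs_le.1 bf1).2
    gcongr
  have r2 : -(τ ^ 2 * K ^ 3 * V ^ 2) ≤ τ ^ 2 * gt * f1 ^ 2 * V ^ 2 := by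
    have h1 := prod gt (τ ^ 2 * f1 ^ 2 * V ^ 2) bgt (by positivity)
    have h2 : K * (τ ^ 2 * f1 ^ 2 * V ^ 2) ≤ K * (τ ^ 2 * K ^ 2 * V ^ 2) := by gcongr
    linarith
  have r3 : ((h1 * P + h2 * V) - k * Y + k * τ * f1 * V - gx * Y - τ * g * f2 * V) ^ 2 ≤
      3 * K ^ 2 * P ^ 2 + 27 * τ ^ 2 * K ^ 4 * V ^ 2 + 12 * K ^ 2 * Y ^ 2 := by
    have h0 : ((h1 * P + h2 * V) - k * Y + k * τ * f1 * V - gx * Y - τ * g * f2 * V) ^ 2 ≤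
        3 * ((h1 * P) ^ 2 + ((h2 + k * τ * f1 - τ * g * f2) * V) ^ 2 + ((k + gx) * Y) ^ 2) := by
      have : (h1 * P + h2 * V) - k * Y + k * τ * f1 * V - gx * Y - τ * g * f2 * V =
        h1 * P + (h2 + k * τ * f1 - τ * g * f2) * V - (k + gx) * Y := by ring
      rw [this]
      generalize h1 * P = x
      generalize (h2 + k * τ * f1 - τ * g * f2) * V = y
      generalize (k + gx) * Y = z
      nlinarith [sq_nonneg (x - y), sq_nonneg (x + z), sq_nonneg (y + z)]
    have s1 : h1 ^ 2 ≤ K ^ 2 := sq_le_sq' (abs_le.1 bh1).1 (abs_le.1 bh1).2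
    have s2 : (h2 + k * τ * f1 - τ * g * f2) ^ 2 ≤ (3 * τ * K ^ 2) ^ 2 := by
      have : |h2 + k * τ * f1 - τ * g * f2| ≤ 3 * τ * K ^ 2 := by
        calc |h2 + k * τ * f1 - τ * g * f2| ≤ |h2 + k * τ * f1| + |τ * g * f2| := abs_sub _ _
          _ ≤ |h2| + |k * τ * f1| + |τ * g * f2| := by gcongr; exact abs_add_le _ _
          _ = |h2| + |k| * τ * |f1| + τ * |g| * |f2| := by
              simp only [abs_mul, abs_of_pos hτ0]
          _ ≤ K + K * τ * K + τ * K * K := by gcongr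
          _ ≤ 3 * τ * K ^ 2 := by
              have h1 : K ≤ K ^ 2 := by nlinarith
              have h2 : K ^ 2 ≤ τ * K ^ 2 := by nlinarith [sq_nonneg K]
              nlinarith
      exact sq_le_sq' (abs_le.1 this).1 (abs_le.1 this).2
    have s3 : (k + gx) ^ 2 ≤ (2 * K) ^ 2 := by
      apply sq_le_sq' <;> linarith [(abs_le.1 bk).1, (abs_le.1 bk).2, (abs_le.1 bgx).1,
        (abs_le.1 bgx).2]
    have t1 := mul_le_mul_of_nonneg_right s1 (sq_nonneg P)
    have t2 := mul_le_mul_of_nonneg_right s2 (sq_nonneg V)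
    have t3 := mul_le_mul_of_nonneg_right s3 (sq_nonneg Y)
    rw [mul_pow, mul_pow, mul_pow] at h0
    linarith
  have r4 : -(2 * K * P ^ 2) ≤ 2 * (σ * p1) * P ^ 2 := by
    have := prod _ (P ^ 2) (sgn _ bp1) (sq_nonneg _); linarith
  have r5 := cross _ P V (sgn _ bp2)
  have r6 := cross _ Q (Y - τ * f1 * V) (sgn _ bq1)
  have r7 := cross _ Q V (sgn _ bq2)
  have r8 : -(2 * K * Q ^ 2) ≤ 2 * (σ * q3) * Q ^ 2 := by
    have := prod _ (Q ^ 2) (sgn _ bq3) (sq_nonneg _); linarith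
  have r9 := cross (-(σ * cx)) P Q (by rw [abs_neg]; exact sgn _ bcx)
  have r10 : K * (Y - τ * f1 * V) ^ 2 ≤ 2 * K * Y ^ 2 + 2 * τ ^ 2 * K ^ 3 * V ^ 2 := by
    have h1 : (Y - τ * f1 * V) ^ 2 ≤ 2 * Y ^ 2 + 2 * (τ * f1 * V) ^ 2 := by
      nlinarith [sq_nonneg (Y + τ * f1 * V)]
    have h2 : K * (Y - τ * f1 * V) ^ 2 ≤ K * (2 * Y ^ 2 + 2 * (τ * f1 * V) ^ 2) := by gcongr
    have h3 : 2 * K * τ ^ 2 * V ^ 2 * f1 ^ 2 ≤ 2 * K * τ ^ 2 * V ^ 2 * K ^ 2 := by gcongr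
    linarith
  -- powers of K
  have k1 : K ≤ K ^ 4 := by
    calc K = K ^ 1 := (pow_one K).symm
      _ ≤ K ^ 4 := pow_le_pow_right₀ hK (by norm_num)
  have k2 : K ^ 2 ≤ K ^ 4 := pow_le_pow_right₀ hK (by norm_num)
  have k3 : K ^ 3 ≤ K ^ 4 := pow_le_pow_right₀ hK (by norm_num)
  have τ2 : 1 ≤ τ ^ 2 := one_le_pow₀ hτ1
  -- collected
  have a1 : K * Y ^ 2 ≤ K ^ 4 * Y ^ 2 := by gcongr
  have a2 : K ^ 2 * Y ^ 2 ≤ K ^ 4 * Y ^ 2 := by gcongr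
  have a3 : K * P ^ 2 ≤ K ^ 4 * P ^ 2 := by gcongr
  have a4 : K ^ 2 * P ^ 2 ≤ K ^ 4 * P ^ 2 := by gcongr
  have a5 : K * Q ^ 2 ≤ K ^ 4 * Q ^ 2 := by gcongr
  have a6 : τ ^ 2 * K ^ 3 * V ^ 2 ≤ τ ^ 2 * K ^ 4 * V ^ 2 := by gcongr
  have a7 : K * V ^ 2 ≤ τ ^ 2 * K ^ 4 * V ^ 2 := by
    calc K * V ^ 2 = 1 * K * V ^ 2 := by ring
      _ ≤ τ ^ 2 * K ^ 4 * V ^ 2 := by gcongr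
  have b1 := mul_le_mul_of_nonneg_right hτ (sq_nonneg Y)
  have b2 := mul_le_mul_of_nonneg_right hτ (sq_nonneg P)
  have b3 := mul_le_mul_of_nonneg_right hτ (sq_nonneg Q)
  have b4 := mul_le_mul_of_nonneg_right hτ (by positivity : 0 ≤ τ ^ 2 * V ^ 2)
  have b5 : V ^ 2 ≤ τ ^ 2 * V ^ 2 := le_mul_of_one_le_left (sq_nonneg _) τ2
  have c1 : 0 ≤ K ^ 4 * Y ^ 2 := by positivity
  have c2 : 0 ≤ K ^ 4 * P ^ 2 := by positivity
  have c3 : 0 ≤ K ^ 4 * Q ^ 2 := by positivity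
  have c4 : 0 ≤ τ ^ 2 * K ^ 4 * V ^ 2 := by positivity
  have c5 := sq_nonneg Y
  have c6 := sq_nonneg P
  have c7 := sq_nonneg Q
  have key : 60 * K ^ 4 * Y ^ 2 + 60 * K ^ 4 * P ^ 2 + 60 * K ^ 4 * Q ^ 2
      + 60 * (τ ^ 2 * K ^ 4 * V ^ 2) + P ^ 2 + Q ^ 2 + V ^ 2 ≤
      2 * τ * m ^ 4 * Y ^ 2 + 2 * τ ^ 3 * m ^ 4 * V ^ 2 + 2 * τ * m ^ 4 * (P ^ 2 + Q ^ 2) := by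
    have d1 : 0 ≤ τ * m ^ 4 * Y ^ 2 := by positivity
    have d2 : 0 ≤ τ * m ^ 4 * P ^ 2 := by positivity
    have d3 : 0 ≤ τ * m ^ 4 * Q ^ 2 := by positivity
    have d4 : 0 ≤ τ * m ^ 4 * (τ ^ 2 * V ^ 2) := by positivity
    linarith
  linarith

/-- Iterated form of the divergence theorem on a rectangle. -/
lemma div_rect {a b t0 t1 : ℝ} (A B A' B' : ℝ → ℝ → ℝ)
    (hA : ∀ x t, HasDerivAt (fun y => A y t) (A' x t) x)
    (hB : ∀ x t, HasDerivAt (fun s => B x s) (B' x t) t)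
    (hA' : Continuous (Function.uncurry A')) (hB' : Continuous (Function.uncurry B')) :
    ∫ x in a..b, ∫ t in t0..t1, (A' x t + B' x t) =
      (∫ t in t0..t1, (A b t - A a t)) + ∫ x in a..b, (B x t1 - B x t0) := by
  have cA : ∀ x, Continuous (fun t => A' x t) := fun x =>
    hA'.comp (by fun_prop : Continuous fun t : ℝ => (x, t))
  have cA2 : ∀ t, Continuous (fun x => A' x t) := fun t =>
    hA'.comp (by fun_prop : Continuous fun x : ℝ => (x, t))
  have cB : ∀ x, Continuous (fun t => B' x t) := fun x =>
    hB'.comp (by fun_prop : Continuous fun t : ℝ => (x, t))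
  have iA : Continuous fun x => ∫ t in t0..t1, A' x t :=
    intervalIntegral.continuous_parametric_intervalIntegral_of_continuous' hA' _ _
  have iB : Continuous fun x => ∫ t in t0..t1, B' x t :=
    intervalIntegral.continuous_parametric_intervalIntegral_of_continuous' hB' _ _
  have h1 : ∀ x, ∫ t in t0..t1, (A' x t + B' x t) =
      (∫ t in t0..t1, A' x t) + ∫ t in t0..t1, B' x t := fun x =>
    intervalIntegral.integral_add ((cA x).intervalIntegrable _ _) ((cB x).intervalIntegrable _ _)
  simp_rw [h1]
  rw [intervalIntegral.integral_add (iA.intervalIntegrable _ _) (iB.intervalIntegrable _ _)]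
  congr 1
  · rw [MeasureTheory.intervalIntegral_intervalIntegral_swap]
    · refine intervalIntegral.integral_congr fun t _ => ?_
      exact intervalIntegral.integral_eq_sub_of_hasDerivAt (fun x _ => hA x t)
        ((cA2 t).intervalIntegrable _ _)
    · have : IntegrableOn (Function.uncurry A') (Set.uIcc a b ×ˢ Set.uIcc t0 t1)
          volume :=
        hA'.continuousOn.integrableOn_compact (isCompact_uIcc.prod isCompact_uIcc)
      exact this.mono_set (Set.prod_mono Set.uIoc_subset_uIcc Set.uIoc_subset_uIcc)
  · refine intervalIntegral.integral_congr fun x _ => ?_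
    exact intervalIntegral.integral_eq_sub_of_hasDerivAt (fun t _ => hB x t)
        ((cB x).intervalIntegrable _ _)

lemma eq_zero_of_integral_nonpos {a b : ℝ} (hab : a < b) {f : ℝ → ℝ} (hf : Continuous f)
    (h0 : ∀ x ∈ Icc a b, 0 ≤ f x) (hi : ∫ x in a..b, f x ≤ 0) : ∀ x ∈ Icc a b, f x = 0 := by
  intro x hx
  by_contra hne
  have := intervalIntegral.integral_pos hab hf.continuousOn
    (fun y hy => h0 y (Ioc_subset_Icc_self hy)) ⟨x, hx, lt_of_le_of_ne (h0 x hx) (Ne.symm hne)⟩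
  linarith

open Set Filter Topology MeasureTheory

set_option maxHeartbeats 4000000 in
/-- The Carleman flux in the space direction. -/
lemma carl_A (lam τ σ a κt : ℝ) (V U S P Q G C : ℝ → ℝ) {X ux ut px qx gx cx : ℝ}
    (hV : HasDerivAt V (U X) X) (hU : HasDerivAt U ux X) (hS : HasDerivAt S ut X)
    (hP : HasDerivAt P px X) (hQ : HasDerivAt Q qx X) (hG : HasDerivAt G gx X)
    (hC : HasDerivAt C cx X) :
    HasDerivAt (fun X => Real.exp (2 * τ * (Real.exp (lam * X) - Real.exp (lam * a))) *
      (σ * (κt * (P X ^ 2 + Q X ^ 2) - 2 * C X * P X * Q X)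
        + 2 * G X * (U X + τ * (lam * Real.exp (lam * X)) * V X) * S X
        + 2 * τ * (lam * Real.exp (lam * X)) * G X ^ 2 *
            (U X + τ * (lam * Real.exp (lam * X)) * V X) ^ 2
        + 2 * τ ^ 3 * G X ^ 2 * (lam * Real.exp (lam * X)) ^ 3 * V X ^ 2))
      (Real.exp (2 * τ * (Real.exp (lam * X) - Real.exp (lam * a))) *
      (2 * τ * (lam * Real.exp (lam * X)) *
        (σ * (κt * (P X ^ 2 + Q X ^ 2) - 2 * C X * P X * Q X)
        + 2 * G X * (U X + τ * (lam * Real.exp (lam * X)) * V X) * S X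
        + 2 * τ * (lam * Real.exp (lam * X)) * G X ^ 2 *
            (U X + τ * (lam * Real.exp (lam * X)) * V X) ^ 2
        + 2 * τ ^ 3 * G X ^ 2 * (lam * Real.exp (lam * X)) ^ 3 * V X ^ 2)
      + (σ * (κt * (2 * P X * px + 2 * Q X * qx)
            - 2 * (cx * P X * Q X + C X * px * Q X + C X * P X * qx))
        + 2 * gx * (U X + τ * (lam * Real.exp (lam * X)) * V X) * S X
        + 2 * G X * (ux + τ * (lam ^ 2 * Real.exp (lam * X)) * V X
            + τ * (lam * Real.exp (lam * X)) * U X) * S X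
        + 2 * G X * (U X + τ * (lam * Real.exp (lam * X)) * V X) * ut
        + 2 * τ * (lam ^ 2 * Real.exp (lam * X)) * G X ^ 2 *
            (U X + τ * (lam * Real.exp (lam * X)) * V X) ^ 2
        + 2 * τ * (lam * Real.exp (lam * X)) * (2 * G X * gx) *
            (U X + τ * (lam * Real.exp (lam * X)) * V X) ^ 2
        + 2 * τ * (lam * Real.exp (lam * X)) * G X ^ 2 *
            (2 * (U X + τ * (lam * Real.exp (lam * X)) * V X) *
              (ux + τ * (lam ^ 2 * Real.exp (lam * X)) * V X
                + τ * (lam * Real.exp (lam * X)) * U X))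
        + 2 * τ ^ 3 * (2 * G X * gx * (lam * Real.exp (lam * X)) ^ 3 * V X ^ 2
            + 3 * G X ^ 2 * (lam * Real.exp (lam * X)) ^ 2 *
                (lam ^ 2 * Real.exp (lam * X)) * V X ^ 2
            + G X ^ 2 * (lam * Real.exp (lam * X)) ^ 3 * (2 * V X * U X))))) X := by
  have hl : HasDerivAt (fun X => Real.exp (lam * X)) (lam * Real.exp (lam * X)) X := by
    have := ((hasDerivAt_id X).const_mul lam).exp
    simpa [mul_comm] using this
  have hf1 : HasDerivAt (fun X => lam * Real.exp (lam * X)) (lam ^ 2 * Real.exp (lam * X)) X := by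
    exact (hl.const_mul lam).congr_deriv (by ring)
  have hE : HasDerivAt (fun X => Real.exp (2 * τ * (Real.exp (lam * X) - Real.exp (lam * a))))
      (Real.exp (2 * τ * (Real.exp (lam * X) - Real.exp (lam * a))) *
        (2 * τ * (lam * Real.exp (lam * X)))) X :=
    ((hl.sub_const _).const_mul (2 * τ)).exp
  have hY : HasDerivAt (fun X => U X + τ * (lam * Real.exp (lam * X)) * V X)
      (ux + (τ * (lam ^ 2 * Real.exp (lam * X)) * V X
                + τ * (lam * Real.exp (lam * X)) * U X)) X :=
    hU.add ((hf1.const_mul τ).mul hV)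
  have h1 : HasDerivAt (fun X => κt * (P X ^ 2 + Q X ^ 2)) (κt * (2 * P X * px + 2 * Q X * qx)) X := by
    exact (((hP.pow 2).add (hQ.pow 2)).const_mul κt).congr_deriv (by push_cast; ring)
  have h2 : HasDerivAt (fun X => 2 * C X * P X * Q X)
      (2 * (cx * P X * Q X + C X * px * Q X + C X * P X * qx)) X := by
    exact (((hC.const_mul 2).mul hP).mul hQ).congr_deriv (by
      simp only [Pi.mul_apply]; ring)
  have h3 := ((hG.const_mul 2).mul hY).mul hS
  have h4 := ((hf1.const_mul (2 * τ)).mul (hG.pow 2)).mul (hY.pow 2)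
  have h5 := (((hG.pow 2).const_mul (2 * τ ^ 3)).mul (hf1.pow 3)).mul (hV.pow 2)
  exact (hE.mul (((((h1.sub h2).const_mul σ).add h3).add h4).add h5)).congr_deriv (by
    simp only [Pi.pow_apply, Pi.mul_apply, Pi.add_apply, Pi.sub_apply]
    push_cast
    ring)

set_option maxHeartbeats 4000000 in
/-- The Carleman flux in the time direction. -/
lemma carl_B (E f1 τ σ : ℝ) (V U P Q G : ℝ → ℝ) {t s ut pt qt gt : ℝ}
    (hV : HasDerivAt V s t) (hU : HasDerivAt U ut t)
    (hP : HasDerivAt P pt t) (hQ : HasDerivAt Q qt t) (hG : HasDerivAt G gt t) :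
    HasDerivAt (fun t => E * (σ * (P t ^ 2 + Q t ^ 2) - G t * (U t + τ * f1 * V t) ^ 2
        + τ ^ 2 * G t * f1 ^ 2 * V t ^ 2))
      (E * (σ * (2 * P t * pt + 2 * Q t * qt) - gt * (U t + τ * f1 * V t) ^ 2
        - G t * (2 * (U t + τ * f1 * V t) * (ut + τ * f1 * s))
        + τ ^ 2 * gt * f1 ^ 2 * V t ^ 2 + τ ^ 2 * G t * f1 ^ 2 * (2 * V t * s))) t := by
  have hY : HasDerivAt (fun t => U t + τ * f1 * V t) (ut + τ * f1 * s) t :=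
    hU.add (hV.const_mul _)
  exact ((((((hP.pow 2).add (hQ.pow 2)).const_mul σ).sub (hG.mul (hY.pow 2))).add
    (((hG.const_mul (τ ^ 2)).mul_const (f1 ^ 2)).mul (hV.pow 2))).const_mul E).congr_deriv (by
      simp only [Pi.pow_apply]
      push_cast
      ring)

/-- The algebraic identity of the Carleman estimate. -/
lemma carl_alg {τ f1 f2 g gx gt k c cx σ h1 h2 p1 p2 q1 q2 q3 V U S UX Ut P Px Pt Q Qx Qt : ℝ}
    (hS : S = g * UX + (h1 * P + h2 * V) - k * U)
    (hP : Pt + k * Px = c * Qx + (p1 * P + p2 * V))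
    (hQ : Qt + k * Qx = c * Px + (q1 * U + q2 * V + q3 * Q)) :
      2 * τ * f2 * g ^ 2 * (U + τ * f1 * V) ^ 2
        + 2 * τ ^ 3 * g * f1 ^ 2 * (3 * g * f2 + 2 * gx * f1) * V ^ 2
      - gt * (U + τ * f1 * V) ^ 2 + τ ^ 2 * gt * f1 ^ 2 * V ^ 2
      - ((h1 * P + h2 * V) - k * (U + τ * f1 * V) + k * τ * f1 * V - gx * (U + τ * f1 * V)
          - τ * g * f2 * V) ^ 2
      + 2 * τ * f1 * (σ * k * (P ^ 2 + Q ^ 2) - 2 * σ * c * P * Q)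
      + σ * (2 * P * (p1 * P + p2 * V)
          + 2 * Q * (q1 * ((U + τ * f1 * V) - τ * f1 * V) + q2 * V + q3 * Q)
          - 2 * cx * P * Q)
      + (gx * (U + τ * f1 * V) + g * ((UX + τ * f2 * V + τ * f1 * U) + τ * f1 * (U + τ * f1 * V))
          + τ ^ 2 * g * f1 ^ 2 * V) ^ 2 + (S + 2 * τ * g * f1 * (U + τ * f1 * V)) ^ 2
      = 2 * τ * f1 *
        (σ * (k * (P ^ 2 + Q ^ 2) - 2 * c * P * Q)
        + 2 * g * (U + τ * f1 * V) * S
        + 2 * τ * f1 * g ^ 2 * (U + τ * f1 * V) ^ 2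
        + 2 * τ ^ 3 * g ^ 2 * f1 ^ 3 * V ^ 2)
      + (σ * (k * (2 * P * Px + 2 * Q * Qx)
            - 2 * (cx * P * Q + c * Px * Q + c * P * Qx))
        + 2 * gx * (U + τ * f1 * V) * S
        + 2 * g * (UX + τ * f2 * V + τ * f1 * U) * S
        + 2 * g * (U + τ * f1 * V) * Ut
        + 2 * τ * f2 * g ^ 2 * (U + τ * f1 * V) ^ 2
        + 2 * τ * f1 * (2 * g * gx) * (U + τ * f1 * V) ^ 2
        + 2 * τ * f1 * g ^ 2 *
            (2 * (U + τ * f1 * V) * (UX + τ * f2 * V + τ * f1 * U))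
        + 2 * τ ^ 3 * (2 * g * gx * f1 ^ 3 * V ^ 2
            + 3 * g ^ 2 * f1 ^ 2 * f2 * V ^ 2
            + g ^ 2 * f1 ^ 3 * (2 * V * U)))
      + (σ * (2 * P * Pt + 2 * Q * Qt) - gt * (U + τ * f1 * V) ^ 2
        - g * (2 * (U + τ * f1 * V) * (Ut + τ * f1 * S))
        + τ ^ 2 * gt * f1 ^ 2 * V ^ 2 + τ ^ 2 * g * f1 ^ 2 * (2 * V * S)) := by
  have e1 : Pt = c * Qx + (p1 * P + p2 * V) - k * Px := by linarith
  have e2 : Qt = c * Px + (q1 * U + q2 * V + q3 * Q) - k * Qx := by linarith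
  rw [e1, e2, hS]
  ring

open Set Filter Topology MeasureTheory

lemma rect_bound (a b t0 t1 : ℝ) (Φ : ℝ → ℝ → ℝ) (h : Continuous (Function.uncurry Φ)) :
    ∃ K, ∀ x ∈ Icc a b, ∀ t ∈ Icc t0 t1, |Φ x t| ≤ K := by
  obtain ⟨K, hK⟩ := ((isCompact_Icc (a := a) (b := b)).prod
    (isCompact_Icc (a := t0) (b := t1))).exists_bound_of_continuousOn h.continuousOn
  exact ⟨K, fun x hx t ht => by simpa using hK (x, t) ⟨hx, ht⟩⟩

/-- Elementary: `J * exp (2 τ η) ≤ K τ` for all large `τ` forces `J ≤ 0`. -/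
lemma nonpos_of_exp_bound {J K η τ0 : ℝ} (hη : 0 < η)
    (h : ∀ τ, τ0 ≤ τ → J * Real.exp (2 * τ * η) ≤ K * τ) : J ≤ 0 := by
  by_contra hJ
  push Not at hJ
  set τ := max (max τ0 1) ((|K| + 1) / (2 * J * η ^ 2)) with hτ
  have h1 : τ0 ≤ τ := (le_max_left _ _).trans (le_max_left _ _)
  have h2 : 1 ≤ τ := (le_max_right _ _).trans (le_max_left _ _)
  have h3 : (|K| + 1) / (2 * J * η ^ 2) ≤ τ := le_max_right _ _
  have h4 := h τ h1
  have h5 : (2 * τ * η) ^ 2 / 2 ≤ Real.exp (2 * τ * η) := by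
    have := Real.quadratic_le_exp_of_nonneg (x := 2 * τ * η) (by positivity)
    have h0 : 0 ≤ 2 * τ * η := by positivity
    linarith
  have h6 : |K| + 1 ≤ τ * (2 * J * η ^ 2) := by
    rwa [div_le_iff₀ (by positivity)] at h3
  have h7 : J * ((2 * τ * η) ^ 2 / 2) ≤ K * τ :=
    (mul_le_mul_of_nonneg_left h5 hJ.le).trans h4
  have h8 : (|K| + 1) * τ ≤ τ * (2 * J * η ^ 2) * τ := by gcongr
  have h9 : K ≤ |K| := le_abs_self K
  nlinarith

set_option maxHeartbeats 4000000 in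
/-- Carleman uniqueness across a superluminal curve (straightened to `X = a`). -/
theorem carleman {a b t0 t1 σ m0 : ℝ} (hab : a < b) (ht : t0 < t1) (hσ : σ = 1 ∨ σ = -1)
    (hm0 : 0 < m0)
    (V U S UX Ut P Px Pt Q Qx Qt G Gx Gt C Cx h1 h2 p1 p2 q1 q2 q3 : ℝ → ℝ → ℝ) (k : ℝ → ℝ)
    (cV : Continuous (Function.uncurry V)) (cU : Continuous (Function.uncurry U))
    (cS : Continuous (Function.uncurry S)) (cUX : Continuous (Function.uncurry UX))
    (cUt : Continuous (Function.uncurry Ut)) (cP : Continuous (Function.uncurry P))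
    (cPx : Continuous (Function.uncurry Px)) (cPt : Continuous (Function.uncurry Pt))
    (cQ : Continuous (Function.uncurry Q)) (cQx : Continuous (Function.uncurry Qx))
    (cQt : Continuous (Function.uncurry Qt)) (cG : Continuous (Function.uncurry G))
    (cGx : Continuous (Function.uncurry Gx)) (cGt : Continuous (Function.uncurry Gt))
    (cC : Continuous (Function.uncurry C)) (cCx : Continuous (Function.uncurry Cx))
    (ch1 : Continuous (Function.uncurry h1)) (ch2 : Continuous (Function.uncurry h2))
    (cp1 : Continuous (Function.uncurry p1)) (cp2 : Continuous (Function.uncurry p2))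
    (cq1 : Continuous (Function.uncurry q1)) (cq2 : Continuous (Function.uncurry q2))
    (cq3 : Continuous (Function.uncurry q3)) (ck : Continuous k)
    (dVx : ∀ x t, HasDerivAt (fun y => V y t) (U x t) x)
    (dVt : ∀ x t, HasDerivAt (fun s => V x s) (S x t) t)
    (dUx : ∀ x t, HasDerivAt (fun y => U y t) (UX x t) x)
    (dUt : ∀ x t, HasDerivAt (fun s => U x s) (Ut x t) t)
    (dSx : ∀ x t, HasDerivAt (fun y => S y t) (Ut x t) x)
    (dPx : ∀ x t, HasDerivAt (fun y => P y t) (Px x t) x)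
    (dPt : ∀ x t, HasDerivAt (fun s => P x s) (Pt x t) t)
    (dQx : ∀ x t, HasDerivAt (fun y => Q y t) (Qx x t) x)
    (dQt : ∀ x t, HasDerivAt (fun s => Q x s) (Qt x t) t)
    (dGx : ∀ x t, HasDerivAt (fun y => G y t) (Gx x t) x)
    (dGt : ∀ x t, HasDerivAt (fun s => G x s) (Gt x t) t)
    (dCx : ∀ x t, HasDerivAt (fun y => C y t) (Cx x t) x)
    (eS : ∀ x ∈ Icc a b, ∀ t ∈ Icc t0 t1,
      S x t = G x t * UX x t + (h1 x t * P x t + h2 x t * V x t) - k t * U x t)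
    (eP : ∀ x ∈ Icc a b, ∀ t ∈ Icc t0 t1,
      Pt x t + k t * Px x t = C x t * Qx x t + (p1 x t * P x t + p2 x t * V x t))
    (eQ : ∀ x ∈ Icc a b, ∀ t ∈ Icc t0 t1,
      Qt x t + k t * Qx x t =
        C x t * Px x t + (q1 x t * U x t + q2 x t * V x t + q3 x t * Q x t))
    (hG : ∀ x ∈ Icc a b, ∀ t ∈ Icc t0 t1, m0 ≤ G x t)
    (hk : ∀ x ∈ Icc a b, ∀ t ∈ Icc t0 t1, m0 ≤ σ * k t - |C x t|)
    (z0 : ∀ x ∈ Icc a b, V x t0 = 0 ∧ U x t0 = 0 ∧ P x t0 = 0 ∧ Q x t0 = 0)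
    (z1 : ∀ x ∈ Icc a b, V x t1 = 0 ∧ U x t1 = 0 ∧ P x t1 = 0 ∧ Q x t1 = 0)
    (zb : ∀ t ∈ Icc t0 t1, V b t = 0 ∧ U b t = 0 ∧ P b t = 0 ∧ Q b t = 0) :
    ∀ x ∈ Ioo a b, ∀ t ∈ Icc t0 t1, V x t = 0 ∧ P x t = 0 ∧ Q x t = 0 := by
  unfold Function.uncurry at *
  obtain ⟨K0, hK0⟩ := rect_bound a b t0 t1 Gx (by unfold Function.uncurry; fun_prop)
  have hK0' : 0 ≤ K0 := (abs_nonneg _).trans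
    (hK0 a (left_mem_Icc.2 hab.le) t0 (left_mem_Icc.2 ht.le))
  obtain ⟨lam, hlam1, hlam⟩ : ∃ lam : ℝ, 1 ≤ lam ∧ 1 ≤ 3 * m0 * lam - 2 * K0 := by
    refine ⟨(2 * K0 + 1) / (3 * m0) + 1, ?_, ?_⟩
    · have : 0 ≤ (2 * K0 + 1) / (3 * m0) := by positivity
      linarith
    · have : 3 * m0 * ((2 * K0 + 1) / (3 * m0) + 1) = 2 * K0 + 1 + 3 * m0 := by field_simp
      rw [this]; linarith
  -- uniform bound
  obtain ⟨K, hK⟩ := rect_bound a b t0 t1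
    (fun x t => 1 + |lam * Real.exp (lam * x)| + |lam ^ 2 * Real.exp (lam * x)| + |G x t|
      + |Gx x t| + |Gt x t| + |k t| + |Cx x t| + |h1 x t| + |h2 x t| + |p1 x t| + |p2 x t|
      + |q1 x t| + |q2 x t| + |q3 x t|) (by unfold Function.uncurry; fun_prop)
  obtain ⟨K2, hK2⟩ := rect_bound a b t0 t1
    (fun x t => |σ * (k t * (P x t ^ 2 + Q x t ^ 2) - 2 * C x t * P x t * Q x t)|
      + |2 * G x t * U x t * S x t| + |2 * G x t * (lam * Real.exp (lam * x)) * V x t * S x t|)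
      (by unfold Function.uncurry; fun_prop)
  have hK1 : 1 ≤ K := by
    have := hK a (left_mem_Icc.2 hab.le) t0 (left_mem_Icc.2 ht.le)
    refine le_trans ?_ ((le_abs_self _).trans this)
    simp only [add_assoc]
    exact le_add_of_nonneg_right (by positivity)
  set m := min (min 1 m0) (Real.exp (lam * a)) with hm_def
  have hm : 0 < m := by positivity
  have hm1 : m ≤ 1 := (min_le_left _ _).trans (min_le_left _ _)
  have hmm0 : m ≤ m0 := (min_le_left _ _).trans (min_le_right _ _)
  have hme : m ≤ Real.exp (lam * a) := min_le_right _ _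
  set τ0 := max 1 ((60 * K ^ 4 + 1) / m ^ 4) with hτ0
  -- main estimate
  have main : ∀ τ, τ0 ≤ τ →
      ∫ x in a..b, ∫ t in t0..t1,
        Real.exp (2 * τ * (Real.exp (lam * x) - Real.exp (lam * a))) *
          (V x t ^ 2 + P x t ^ 2 + Q x t ^ 2) ≤ K2 * (t1 - t0) * τ := by
    intro τ hτ
    have hτ1 : 1 ≤ τ := (le_max_left _ _).trans hτ
    have hτm : 60 * K ^ 4 + 1 ≤ τ * m ^ 4 := by
      have := (le_max_right _ _).trans hτ
      rwa [div_le_iff₀ (by positivity)] at this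
    have dA := fun x t => carl_A lam τ σ a (k t) (fun y => V y t) (fun y => U y t)
      (fun y => S y t) (fun y => P y t) (fun y => Q y t) (fun y => G y t) (fun y => C y t)
      (dVx x t) (dUx x t) (dSx x t) (dPx x t) (dQx x t) (dGx x t) (dCx x t)
    have dB := fun x t => carl_B (Real.exp (2 * τ * (Real.exp (lam * x) - Real.exp (lam * a))))
      (lam * Real.exp (lam * x)) τ σ (fun s => V x s) (fun s => U x s) (fun s => P x s)
      (fun s => Q x s) (fun s => G x s) (dVt x t) (dUt x t) (dPt x t) (dQt x t) (dGt x t)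
    have hdiv := div_rect (a := a) (b := b) (t0 := t0) (t1 := t1) _ _ _ _ dA dB
      (by unfold Function.uncurry; fun_prop) (by unfold Function.uncurry; fun_prop)
    have hBz : ∫ x in a..b, ((fun x t => Real.exp (2 * τ * (Real.exp (lam * x) - Real.exp (lam * a)))
        * (σ * (P x t ^ 2 + Q x t ^ 2) - G x t * (U x t + τ * (lam * Real.exp (lam * x)) * V x t) ^ 2
        + τ ^ 2 * G x t * (lam * Real.exp (lam * x)) ^ 2 * V x t ^ 2)) x t1 -
        (fun x t => Real.exp (2 * τ * (Real.exp (lam * x) - Real.exp (lam * a)))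
        * (σ * (P x t ^ 2 + Q x t ^ 2) - G x t * (U x t + τ * (lam * Real.exp (lam * x)) * V x t) ^ 2
        + τ ^ 2 * G x t * (lam * Real.exp (lam * x)) ^ 2 * V x t ^ 2)) x t0) = 0 := by
      rw [intervalIntegral.integral_congr (g := fun _ => 0)]
      · simp
      · intro x hx
        rw [uIcc_of_le hab.le] at hx
        obtain ⟨a1, a2, a3, a4⟩ := z0 x hx
        obtain ⟨b1, b2, b3, b4⟩ := z1 x hx
        simp [a1, a2, a3, a4, b1, b2, b3, b4]
    rw [hBz, add_zero] at hdiv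
    refine le_trans (b := _) ?_ (hdiv.le.trans ?_)
    · -- pointwise comparison
      refine intervalIntegral.integral_mono_on hab.le ?_ ?_ ?_
      · exact (intervalIntegral.continuous_parametric_intervalIntegral_of_continuous'
          (by unfold Function.uncurry; fun_prop) _ _).intervalIntegrable _ _
      · exact (intervalIntegral.continuous_parametric_intervalIntegral_of_continuous'
          (by unfold Function.uncurry; fun_prop) _ _).intervalIntegrable _ _
      intro x hx
      refine intervalIntegral.integral_mono_on ht.le ?_ ?_ ?_
      · exact Continuous.intervalIntegrable (by fun_prop) _ _
      · exact Continuous.intervalIntegrable (by fun_prop) _ _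
      intro t ht'
      rw [← mul_add]
      refine mul_le_mul_of_nonneg_left ?_ (Real.exp_pos _).le
      have hb := (le_abs_self _).trans (hK x hx t ht')
      have n1 := abs_nonneg (lam * Real.exp (lam * x))
      have n2 := abs_nonneg (lam ^ 2 * Real.exp (lam * x))
      have n3 := abs_nonneg (G x t)
      have n4 := abs_nonneg (Gx x t)
      have n5 := abs_nonneg (Gt x t)
      have n6 := abs_nonneg (k t)
      have n7 := abs_nonneg (Cx x t)
      have n8 := abs_nonneg (h1 x t)
      have n9 := abs_nonneg (h2 x t)
      have n10 := abs_nonneg (p1 x t)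
      have n11 := abs_nonneg (p2 x t)
      have n12 := abs_nonneg (q1 x t)
      have n13 := abs_nonneg (q2 x t)
      have n14 := abs_nonneg (q3 x t)
      have hexp : Real.exp (lam * a) ≤ Real.exp (lam * x) := by
        apply Real.exp_le_exp.2
        exact mul_le_mul_of_nonneg_left hx.1 (by linarith)
      have hex0 := Real.exp_pos (lam * x)
      have hf1 : m ≤ lam * Real.exp (lam * x) := by nlinarith
      have hf2 : m ≤ lam ^ 2 * Real.exp (lam * x) := by
        have : 1 ≤ lam ^ 2 := one_le_pow₀ hlam1
        nlinarith
      have hconv : m ≤ 3 * G x t * (lam ^ 2 * Real.exp (lam * x))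
          + 2 * Gx x t * (lam * Real.exp (lam * x)) := by
        have g1 := hG x hx t ht'
        have g2 := (abs_le.1 (hK0 x hx t ht')).1
        have g3 : 1 ≤ 3 * G x t * lam + 2 * Gx x t := by nlinarith
        have : 3 * G x t * (lam ^ 2 * Real.exp (lam * x))
          + 2 * Gx x t * (lam * Real.exp (lam * x)) =
            (3 * G x t * lam + 2 * Gx x t) * (lam * Real.exp (lam * x)) := by ring
        rw [this]
        nlinarith
      have hpw := pointwise_bound hm hm1 hK1 (V := V x t)
        (Y := U x t + τ * (lam * Real.exp (lam * x)) * V x t) (P := P x t) (Q := Q x t)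
        hτ1 hτm hσ hf1 hf2 (hmm0.trans (hG x hx t ht')) hconv (hmm0.trans (hk x hx t ht'))
        (gt := Gt x t) (cx := Cx x t) (h1 := h1 x t) (h2 := h2 x t) (p1 := p1 x t) (p2 := p2 x t)
        (q1 := q1 x t) (q2 := q2 x t) (q3 := q3 x t)
        (by linarith only [hb, n1, n2, n3, n4, n5, n6, n7, n8, n9, n10, n11, n12, n13, n14])
        (by linarith only [hb, n1, n2, n3, n4, n5, n6, n7, n8, n9, n10, n11, n12, n13, n14])
        (by linarith only [hb, n1, n2, n3, n4, n5, n6, n7, n8, n9, n10, n11, n12, n13, n14])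
        (by linarith only [hb, n1, n2, n3, n4, n5, n6, n7, n8, n9, n10, n11, n12, n13, n14])
        (by linarith only [hb, n1, n2, n3, n4, n5, n6, n7, n8, n9, n10, n11, n12, n13, n14])
        (by linarith only [hb, n1, n2, n3, n4, n5, n6, n7, n8, n9, n10, n11, n12, n13, n14])
        (by linarith only [hb, n1, n2, n3, n4, n5, n6, n7, n8, n9, n10, n11, n12, n13, n14])
        (by linarith only [hb, n1, n2, n3, n4, n5, n6, n7, n8, n9, n10, n11, n12, n13, n14])
        (by linarith only [hb, n1, n2, n3, n4, n5, n6, n7, n8, n9, n10, n11, n12, n13, n14])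
        (by linarith only [hb, n1, n2, n3, n4, n5, n6, n7, n8, n9, n10, n11, n12, n13, n14])
        (by linarith only [hb, n1, n2, n3, n4, n5, n6, n7, n8, n9, n10, n11, n12, n13, n14])
        (by linarith only [hb, n1, n2, n3, n4, n5, n6, n7, n8, n9, n10, n11, n12, n13, n14])
        (by linarith only [hb, n1, n2, n3, n4, n5, n6, n7, n8, n9, n10, n11, n12, n13, n14])
        (by linarith only [hb, n1, n2, n3, n4, n5, n6, n7, n8, n9, n10, n11, n12, n13, n14])
      have halg := carl_alg (τ := τ) (f1 := lam * Real.exp (lam * x))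
        (f2 := lam ^ 2 * Real.exp (lam * x)) (gx := Gx x t) (gt := Gt x t) (cx := Cx x t) (σ := σ)
        (Ut := Ut x t)
        (eS x hx t ht') (eP x hx t ht') (eQ x hx t ht')
      refine le_trans ?_ halg.le
      refine hpw.trans ?_
      exact le_trans (le_add_of_nonneg_right (sq_nonneg _)) (le_add_of_nonneg_right (sq_nonneg _))
    · -- boundary term
      have hKK : ∀ t ∈ Icc t0 t1, _ := fun t h => hK2 a (left_mem_Icc.2 hab.le) t h
      calc _ ≤ ∫ t in t0..t1, K2 * τ := by
            refine intervalIntegral.integral_mono_on ht.le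
              (Continuous.intervalIntegrable (by fun_prop) _ _)
              (Continuous.intervalIntegrable (by fun_prop) _ _) ?_
            intro t ht'
            obtain ⟨b1, b2, b3, b4⟩ := zb t ht'
            have hb := (le_abs_self _).trans (hK2 a (left_mem_Icc.2 hab.le) t ht')
            simp only [b1, b2, b3, b4]
            simp only [sub_self, mul_zero, Real.exp_zero, one_mul]
            have n1 := neg_abs_le (σ * (k t * (P a t ^ 2 + Q a t ^ 2) - 2 * C a t * P a t * Q a t))
            have n2 := neg_abs_le (2 * G a t * U a t * S a t)
            have n3 := neg_abs_le (2 * G a t * (lam * Real.exp (lam * a)) * V a t * S a t)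
            have o1 := abs_nonneg (σ * (k t * (P a t ^ 2 + Q a t ^ 2) - 2 * C a t * P a t * Q a t))
            have o2 := abs_nonneg (2 * G a t * U a t * S a t)
            have o3 := abs_nonneg (2 * G a t * (lam * Real.exp (lam * a)) * V a t * S a t)
            have q1 : 0 ≤ 2 * τ * (lam * Real.exp (lam * a)) * G a t ^ 2 *
                (U a t + τ * (lam * Real.exp (lam * a)) * V a t) ^ 2 := by positivity
            have q2 : 0 ≤ 2 * τ ^ 3 * G a t ^ 2 * (lam * Real.exp (lam * a)) ^ 3 * V a t ^ 2 := by
              positivity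
            have r1 := mul_le_mul_of_nonneg_right hb (by linarith : 0 ≤ τ)
            have r2 := mul_le_mul_of_nonneg_left n3 (by linarith : 0 ≤ τ)
            have r3 := mul_nonneg (sub_nonneg.2 hτ1) (add_nonneg o1 o2)
            linarith
        _ = K2 * (t1 - t0) * τ := by
            rw [intervalIntegral.integral_const, smul_eq_mul]; ring
  -- conclusion
  intro x0 hx0
  have hlam0 : 0 < lam := by linarith
  have cJ : Continuous fun x => ∫ t in t0..t1, (V x t ^ 2 + P x t ^ 2 + Q x t ^ 2) :=
    intervalIntegral.continuous_parametric_intervalIntegral_of_continuous'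
          (by unfold Function.uncurry; fun_prop) _ _
  have nJ : ∀ x, 0 ≤ ∫ t in t0..t1, (V x t ^ 2 + P x t ^ 2 + Q x t ^ 2) := fun x =>
    intervalIntegral.integral_nonneg ht.le fun t _ => by positivity
  have hJ : ∫ x in x0..b, ∫ t in t0..t1, (V x t ^ 2 + P x t ^ 2 + Q x t ^ 2) ≤ 0 := by
    refine nonpos_of_exp_bound (K := K2 * (t1 - t0)) (τ0 := τ0)
      (η := Real.exp (lam * x0) - Real.exp (lam * a)) ?_ ?_
    · have : Real.exp (lam * a) < Real.exp (lam * x0) := by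
        apply Real.exp_lt_exp.2
        exact mul_lt_mul_of_pos_left hx0.1 hlam0
      linarith
    · intro τ hτ
      have hτ1 : 1 ≤ τ := (le_max_left _ _).trans hτ
      refine le_trans ?_ (main τ hτ)
      have cI : Continuous fun x => ∫ t in t0..t1,
          Real.exp (2 * τ * (Real.exp (lam * x) - Real.exp (lam * a))) *
          (V x t ^ 2 + P x t ^ 2 + Q x t ^ 2) :=
        intervalIntegral.continuous_parametric_intervalIntegral_of_continuous'
          (by unfold Function.uncurry; fun_prop) _ _
      rw [← intervalIntegral.integral_mul_const]
      calc _ ≤ ∫ x in x0..b, ∫ t in t0..t1,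
          Real.exp (2 * τ * (Real.exp (lam * x) - Real.exp (lam * a))) *
          (V x t ^ 2 + P x t ^ 2 + Q x t ^ 2) := by
            refine intervalIntegral.integral_mono_on hx0.2.le
              (Continuous.intervalIntegrable (cJ.mul continuous_const) _ _)
              (cI.intervalIntegrable _ _) ?_
            intro x hx
            rw [intervalIntegral.integral_const_mul, mul_comm]
            refine mul_le_mul_of_nonneg_right ?_ (nJ x)
            apply Real.exp_le_exp.2
            have : Real.exp (lam * x0) ≤ Real.exp (lam * x) := by
              apply Real.exp_le_exp.2
              exact mul_le_mul_of_nonneg_left hx.1 hlam0.le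
            have h2 : 0 ≤ 2 * τ := by linarith
            exact mul_le_mul_of_nonneg_left (by linarith) h2
        _ ≤ _ := by
            rw [← intervalIntegral.integral_add_adjacent_intervals
              (cI.intervalIntegrable a x0) (cI.intervalIntegrable x0 b)]
            refine le_add_of_nonneg_left ?_
            refine intervalIntegral.integral_nonneg hx0.1.le fun x _ => ?_
            exact intervalIntegral.integral_nonneg ht.le fun t _ => by positivity
  have e1 := eq_zero_of_integral_nonpos hx0.2 cJ (fun x _ => nJ x) hJ x0
    (left_mem_Icc.2 hx0.2.le)
  have e2 := eq_zero_of_integral_nonpos ht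
    (f := fun t => V x0 t ^ 2 + P x0 t ^ 2 + Q x0 t ^ 2) (by fun_prop)
    (fun t _ => by positivity) e1.le
  intro t ht'
  have := e2 t ht'
  refine ⟨?_, ?_, ?_⟩ <;>
  · refine pow_eq_zero_iff (two_ne_zero) |>.1 ?_
    nlinarith [sq_nonneg (V x0 t), sq_nonneg (P x0 t), sq_nonneg (Q x0 t)]

open Set Filter Topology MeasureTheory

/-- Smooth functions of two real variables. -/
def Sm (f : ℝ → ℝ → ℝ) : Prop := ContDiff ℝ (⊤ : ℕ∞) (Function.uncurry f)

lemma Sm.cont {f : ℝ → ℝ → ℝ} (hf : Sm f) : Continuous (Function.uncurry f) :=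
  ContDiff.continuous hf

lemma Sm.hasFDerivAt {f : ℝ → ℝ → ℝ} (hf : Sm f) (p : ℝ × ℝ) :
    HasFDerivAt (Function.uncurry f) (fderiv ℝ (Function.uncurry f) p) p :=
  (ContDiff.differentiable hf (by simp) p).hasFDerivAt

lemma Sm.dx' {f : ℝ → ℝ → ℝ} (hf : Sm f) (x t : ℝ) :
    HasDerivAt (fun y => f y t) (fderiv ℝ (Function.uncurry f) (x, t) (1, 0)) x := by
  have h1 : HasDerivAt (fun y : ℝ => (y, t)) ((1 : ℝ), (0 : ℝ)) x :=
    (hasDerivAt_id x).prodMk (hasDerivAt_const x t)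
  exact (hf.hasFDerivAt (x, t)).comp_hasDerivAt x h1

lemma Sm.dt' {f : ℝ → ℝ → ℝ} (hf : Sm f) (x t : ℝ) :
    HasDerivAt (fun s => f x s) (fderiv ℝ (Function.uncurry f) (x, t) (0, 1)) t := by
  have h1 : HasDerivAt (fun s : ℝ => (x, s)) ((0 : ℝ), (1 : ℝ)) t :=
    (hasDerivAt_const t x).prodMk (hasDerivAt_id t)
  exact (hf.hasFDerivAt (x, t)).comp_hasDerivAt t h1

lemma Sm.pdx_eq {f : ℝ → ℝ → ℝ} (hf : Sm f) (x t : ℝ) :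
    pdx f x t = fderiv ℝ (Function.uncurry f) (x, t) (1, 0) := (hf.dx' x t).deriv

lemma Sm.pdt_eq {f : ℝ → ℝ → ℝ} (hf : Sm f) (x t : ℝ) :
    pdt f x t = fderiv ℝ (Function.uncurry f) (x, t) (0, 1) := (hf.dt' x t).deriv

lemma Sm.dx {f : ℝ → ℝ → ℝ} (hf : Sm f) (x t : ℝ) :
    HasDerivAt (fun y => f y t) (pdx f x t) x := by
  rw [hf.pdx_eq]; exact hf.dx' x t

lemma Sm.dt {f : ℝ → ℝ → ℝ} (hf : Sm f) (x t : ℝ) :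
    HasDerivAt (fun s => f x s) (pdt f x t) t := by
  rw [hf.pdt_eq]; exact hf.dt' x t

lemma Sm.fd {f : ℝ → ℝ → ℝ} (hf : Sm f) :
    ContDiff ℝ (⊤ : ℕ∞) (fderiv ℝ (Function.uncurry f)) :=
  ContDiff.fderiv_right (m := (⊤ : ℕ∞)) hf (by exact_mod_cast le_top)

lemma Sm.px {f : ℝ → ℝ → ℝ} (hf : Sm f) : Sm (pdx f) := by
  have : Function.uncurry (pdx f) = fun p => fderiv ℝ (Function.uncurry f) p (1, 0) := by
    ext ⟨x, t⟩; exact hf.pdx_eq x t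
  unfold Sm; rw [this]
  exact hf.fd.clm_apply contDiff_const

lemma Sm.pt {f : ℝ → ℝ → ℝ} (hf : Sm f) : Sm (pdt f) := by
  have : Function.uncurry (pdt f) = fun p => fderiv ℝ (Function.uncurry f) p (0, 1) := by
    ext ⟨x, t⟩; exact hf.pdt_eq x t
  unfold Sm; rw [this]
  exact hf.fd.clm_apply contDiff_const

lemma Sm.comm {f : ℝ → ℝ → ℝ} (hf : Sm f) (x t : ℝ) : pdt (pdx f) x t = pdx (pdt f) x t := by
  have e1 : Function.uncurry (pdx f) = fun p => fderiv ℝ (Function.uncurry f) p (1, 0) := by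
    ext ⟨x, t⟩; exact hf.pdx_eq x t
  have e2 : Function.uncurry (pdt f) = fun p => fderiv ℝ (Function.uncurry f) p (0, 1) := by
    ext ⟨x, t⟩; exact hf.pdt_eq x t
  have hd : DifferentiableAt ℝ (fderiv ℝ (Function.uncurry f)) (x, t) :=
    hf.fd.differentiable (by simp) _
  rw [hf.px.pdt_eq, hf.pt.pdx_eq, e1, e2, fderiv_clm_apply hd (by fun_prop),
    fderiv_clm_apply hd (by fun_prop)]
  simp
  exact second_derivative_symmetric (f := Function.uncurry f)
    (fun y => hf.hasFDerivAt y) hd.hasFDerivAt (0, 1) (1, 0)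

lemma Sm.mul {f g : ℝ → ℝ → ℝ} (hf : Sm f) (hg : Sm g) : Sm (fun x t => f x t * g x t) :=
  ContDiff.mul hf hg

lemma Sm.add {f g : ℝ → ℝ → ℝ} (hf : Sm f) (hg : Sm g) : Sm (fun x t => f x t + g x t) :=
  ContDiff.add hf hg

lemma Sm.comp {f : ℝ → ℝ → ℝ} {g : ℝ → ℝ} (hg : ContDiff ℝ (⊤ : ℕ∞) g) (hf : Sm f) :
    Sm (fun x t => g (f x t)) :=
  ContDiff.comp hg hf

/-- Passing to the moving frame. -/
def sh (κ : ℝ → ℝ) (f : ℝ → ℝ → ℝ) : ℝ → ℝ → ℝ := fun X t => f (X - κ t) t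

lemma Sm.sh {κ : ℝ → ℝ} (hκ : ContDiff ℝ (⊤ : ℕ∞) κ) {f : ℝ → ℝ → ℝ} (hf : Sm f) :
    Sm (sh κ f) := by
  have : Function.uncurry (_root_.sh κ f) =
      (Function.uncurry f) ∘ fun p : ℝ × ℝ => (p.1 - κ p.2, p.2) := rfl
  unfold Sm; rw [this]
  refine ContDiff.comp hf ?_
  exact (contDiff_fst.sub (hκ.comp contDiff_snd)).prodMk contDiff_snd

lemma Sm.sh_dx {κ : ℝ → ℝ} {f : ℝ → ℝ → ℝ} (hf : Sm f)
    (X t : ℝ) : HasDerivAt (fun y => _root_.sh κ f y t) (_root_.sh κ (pdx f) X t) X := by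
  have := (hf.dx (X - κ t) t).comp X ((hasDerivAt_id X).sub_const (κ t))
  simpa [_root_.sh, Function.comp_def] using this

lemma Sm.sh_dt {κ : ℝ → ℝ} (hκ : ContDiff ℝ (⊤ : ℕ∞) κ) {f : ℝ → ℝ → ℝ} (hf : Sm f)
    (X t : ℝ) : HasDerivAt (fun s => _root_.sh κ f X s)
      (_root_.sh κ (pdt f) X t - deriv κ t * _root_.sh κ (pdx f) X t) t := by
  have hk : HasDerivAt κ (deriv κ t) t := (hκ.differentiable (by simp) t).hasDerivAt
  have h1 : HasDerivAt (fun s : ℝ => (X - κ s, s)) (-deriv κ t, (1 : ℝ)) t := by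
    have := (hk.const_sub X).prodMk (hasDerivAt_id t)
    exact this
  have h2 := HasFDerivAt.comp_hasDerivAt (f := fun s : ℝ => (X - κ s, s)) t
    (hf.hasFDerivAt (X - κ t, t)) h1
  refine h2.congr_deriv ?_
  have : ((-deriv κ t, (1 : ℝ)) : ℝ × ℝ) = (0, 1) - deriv κ t • ((1, 0) : ℝ × ℝ) := by
    ext <;> simp
  rw [this, map_sub, map_smul, smul_eq_mul]
  simp only [_root_.sh, hf.pdx_eq, hf.pdt_eq]

/-- Primitive in the space variable. -/
noncomputable def prim (b : ℝ) (f : ℝ → ℝ → ℝ) : ℝ → ℝ → ℝ := fun X t => ∫ y in b..X, f y t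

lemma prim_cont (b : ℝ) {f : ℝ → ℝ → ℝ} (hf : Continuous (Function.uncurry f)) :
    Continuous (Function.uncurry (prim b f)) := by
  have h : Continuous (Function.uncurry fun (p : ℝ × ℝ) y => f y p.2) :=
    hf.comp (by fun_prop : Continuous fun q : (ℝ × ℝ) × ℝ => (q.2, q.1.2))
  exact intervalIntegral.continuous_parametric_intervalIntegral_of_continuous h continuous_fst

lemma prim_dx (b : ℝ) {f : ℝ → ℝ → ℝ} (hf : Continuous (Function.uncurry f)) (x t : ℝ) :
    HasDerivAt (fun y => prim b f y t) (f x t) x := by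
  have h : Continuous fun y => f y t := hf.comp (by fun_prop : Continuous fun y : ℝ => (y, t))
  exact intervalIntegral.integral_hasDerivAt_right (h.intervalIntegrable _ _)
    (h.stronglyMeasurableAtFilter _ _) h.continuousAt

lemma prim_dt (b : ℝ) {f : ℝ → ℝ → ℝ} (hf : Sm f) (x t : ℝ) :
    HasDerivAt (fun s => prim b f x s) (prim b (pdt f) x t) t := by
  obtain ⟨K, hK⟩ := rect_bound (min b x) (max b x) (t - 1) (t + 1) (pdt f) hf.pt.cont
  have c1 : ∀ s, Continuous fun y => f y s := fun s =>
    hf.cont.comp (by fun_prop : Continuous fun y : ℝ => (y, s))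
  have c2 : ∀ s, Continuous fun y => pdt f y s := fun s =>
    hf.pt.cont.comp (by fun_prop : Continuous fun y : ℝ => (y, s))
  refine (intervalIntegral.hasDerivAt_integral_of_dominated_loc_of_deriv_le
    (F := fun s y => f y s) (F' := fun s y => pdt f y s) (bound := fun _ => K)
    (s := Icc (t - 1) (t + 1)) (Icc_mem_nhds (by linarith) (by linarith)) ?_ ?_ ?_ ?_ ?_ ?_).2
  · exact Eventually.of_forall fun s => (c1 s).aestronglyMeasurable
  · exact (c1 t).intervalIntegrable _ _
  · exact (c2 t).aestronglyMeasurable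
  · refine Eventually.of_forall fun y hy s hs => ?_
    rw [Real.norm_eq_abs]
    exact hK y (uIoc_subset_uIcc hy) s hs
  · exact intervalIntegrable_const
  · exact Eventually.of_forall fun y _ s _ => hf.dt y s

open Set Filter Topology MeasureTheory

/-- The data of a smooth solution of the coupled system on `t ≥ 0`. -/
structure Sys (γ₁ : ℝ) (g h c : ℝ → ℝ) (u θ : ℝ → ℝ → ℝ) : Prop where
  hg : ContDiff ℝ (⊤ : ℕ∞) g
  hh : ContDiff ℝ (⊤ : ℕ∞) h
  hc : ContDiff ℝ (⊤ : ℕ∞) c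
  gpos : ∀ s, 0 < g s
  cpos : ∀ s, 0 < c s
  hu : Sm u
  hθ : Sm θ
  heat : ∀ x t : ℝ, 0 ≤ t →
      pdt u x t = pdx (fun y s => g (θ y s) * pdx u y s + h (θ y s) * pdt θ y s) x t
  wave : ∀ x t : ℝ, 0 ≤ t →
      pdt (pdt θ) x t + γ₁ * pdt θ x t =
        c (θ x t) * pdx (fun y s => c (θ y s) * pdx θ y s) x t - h (θ x t) * pdx u x t

/-- Vanishing of the solution at a point. -/
def Van (u θ : ℝ → ℝ → ℝ) (x t : ℝ) : Prop := u x t = 0 ∧ pdx θ x t = 0 ∧ pdt θ x t = 0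

lemma rect_pos {a b t0 t1 : ℝ} (hab : a ≤ b) (ht : t0 ≤ t1) {Φ : ℝ → ℝ → ℝ}
    (hΦ : Continuous (Function.uncurry Φ))
    (hp : ∀ x ∈ Icc a b, ∀ t ∈ Icc t0 t1, 0 < Φ x t) :
    ∃ m, 0 < m ∧ ∀ x ∈ Icc a b, ∀ t ∈ Icc t0 t1, m ≤ Φ x t := by
  obtain ⟨p, hpm, hmin⟩ := (isCompact_Icc.prod isCompact_Icc).exists_isMinOn
    (s := Icc a b ×ˢ Icc t0 t1)
    ⟨(a, t0), left_mem_Icc.2 hab, left_mem_Icc.2 ht⟩ hΦ.continuousOn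
  refine ⟨Φ p.1 p.2, hp _ hpm.1 _ hpm.2, fun x hx t ht => ?_⟩
  exact hmin (show (x, t) ∈ Icc a b ×ˢ Icc t0 t1 from ⟨hx, ht⟩)

theorem core {γ₁ : ℝ} {g h c : ℝ → ℝ} {u θ : ℝ → ℝ → ℝ} (H : Sys γ₁ g h c u θ)
    {κ : ℝ → ℝ} (hκ : ContDiff ℝ (⊤ : ℕ∞) κ) {t0 t1 N σ s a : ℝ} (h0 : 0 ≤ t0) (ht : t0 < t1)
    (hσ : σ = 1 ∨ σ = -1)
    (hN : ∀ t ∈ Icc t0 t1, ∀ x, N ≤ x → Van u θ x t)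
    (hz0 : ∀ x, a ≤ x + κ t0 → Van u θ x t0)
    (hz1 : ∀ x, a ≤ x + κ t1 → Van u θ x t1)
    (hs : ∀ t ∈ Icc t0 t1, s ≤ σ * deriv κ t)
    (hcs : ∀ t ∈ Icc t0 t1, ∀ x, a ≤ x + κ t → c (θ x t) < s) :
    ∀ t ∈ Icc t0 t1, ∀ x, a < x + κ t → Van u θ x t := by
  obtain ⟨K, hK⟩ : ∃ K, ∀ t ∈ Icc t0 t1, |κ t| ≤ K := by
    obtain ⟨K, hK⟩ := isCompact_Icc.exists_bound_of_continuousOn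
      (s := Icc t0 t1) hκ.continuous.continuousOn
    exact ⟨K, fun t h => hK t h⟩
  obtain ⟨b, hab, hbN⟩ : ∃ b, a < b ∧ ∀ t ∈ Icc t0 t1, N < b - κ t := by
    refine ⟨max a (N + K) + 1, ?_, fun t h => ?_⟩
    · linarith [le_max_left a (N + K)]
    · have := hK t h
      linarith [le_max_right a (N + K), le_abs_self (κ t)]
  set k : ℝ → ℝ := deriv κ with hk_def
  have ck : Continuous k := hκ.continuous_deriv (by simp)
  set ρ : ℝ → ℝ := fun y => h y / g y with hρ_def
  have hρ : ContDiff ℝ (⊤ : ℕ∞) ρ := H.hh.div H.hg (fun y => (H.gpos y).ne')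
  have sg := Sm.comp H.hg H.hθ
  have shh := Sm.comp H.hh H.hθ
  have sc := Sm.comp H.hc H.hθ
  have sρ := Sm.comp hρ H.hθ
  have sq : Sm (fun x t => c (θ x t) * pdx θ x t) := sc.mul H.hθ.px
  have sfl : Sm (fun y s => g (θ y s) * pdx u y s + h (θ y s) * pdt θ y s) :=
    (sg.mul H.hu.px).add (shh.mul H.hθ.pt)
  set fl : ℝ → ℝ → ℝ := fun y s => g (θ y s) * pdx u y s + h (θ y s) * pdt θ y s with fl_def
  set q : ℝ → ℝ → ℝ := fun x t => c (θ x t) * pdx θ x t with q_def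
  set r : ℝ → ℝ → ℝ := fun x t => ρ (θ x t) with r_def
  set G0 : ℝ → ℝ → ℝ := fun x t => g (θ x t) with G0_def
  set C0 : ℝ → ℝ → ℝ := fun x t => c (θ x t) with C0_def
  set U := sh κ u with U_def
  have sU : Sm U := H.hu.sh hκ
  have dUt : ∀ X t, HasDerivAt (fun τ => U X τ) (pdt U X t) t := fun X t => sU.dt X t
  have eUt : ∀ X t, pdt U X t = sh κ (pdt u) X t - k t * sh κ (pdx u) X t :=
    fun X t => (H.hu.sh_dt hκ X t).deriv
  set V := prim b U with V_def
  set S := prim b (pdt U) with S_def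
  have Icc0 : ∀ t ∈ Icc t0 t1, 0 ≤ t := fun t h => h0.trans h.1
  -- u_x vanishes to the right of N
  have uxN : ∀ t ∈ Icc t0 t1, ∀ x, N < x → pdx u x t = 0 := by
    intro t h x hx
    have : (fun y => u y t) =ᶠ[𝓝 x] fun _ => 0 := by
      filter_upwards [Ioi_mem_nhds hx] with y hy
      exact (hN t h y (le_of_lt hy)).1
    unfold pdx
    rw [this.deriv_eq]; simp
  have qt : ∀ x t, pdt q x t = deriv c (θ x t) * pdt θ x t * pdx θ x t
      + c (θ x t) * pdx (pdt θ) x t := by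
    intro x t
    have h1 : HasDerivAt (fun τ => c (θ x τ)) (deriv c (θ x t) * pdt θ x t) t :=
      ((H.hc.differentiable (by simp) _).hasDerivAt).comp t (H.hθ.dt x t)
    have h2 := h1.mul (H.hθ.px.dt x t)
    rw [← H.hθ.comm]
    exact h2.deriv
  have eSS : ∀ X, ∀ t ∈ Icc t0 t1, S X t = sh κ fl X t - k t * U X t := by
    intro X t h
    have hd : ∀ y ∈ uIcc b X, HasDerivAt (fun y => sh κ fl y t - k t * U y t) (pdt U y t) y := by
      intro y _
      have := (sfl.sh_dx (κ := κ) y t).sub ((H.hu.sh_dx (κ := κ) y t).const_mul (k t))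
      refine this.congr_deriv ?_
      rw [eUt]
      simp only [sh]
      rw [H.heat _ _ (Icc0 t h)]
    have hi := intervalIntegral.integral_eq_sub_of_hasDerivAt hd
      ((sU.pt.cont.comp (by fun_prop : Continuous fun y : ℝ => (y, t))).intervalIntegrable _ _)
    have hz := hN t h (b - κ t) (hbN t h).le
    have hux := uxN t h _ (hbN t h)
    have : sh κ fl b t - k t * U b t = 0 := by
      simp only [sh, fl_def, U_def, hz.1, hz.2.2, hux]; ring
    simp only [S_def, prim]
    rw [hi, this]; ring
  obtain ⟨m0, hm0, hm⟩ := rect_pos (a := a) (b := b) (t0 := t0) (t1 := t1) hab.le ht.le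
    (Φ := fun X t => min (sh κ G0 X t) (s - sh κ C0 X t))
    ((sg.sh hκ).cont.min (continuous_const.sub (sc.sh hκ).cont)) (by
      intro X hX t h
      refine lt_min (H.gpos _) ?_
      have := hcs t h (X - κ t) (by linarith [hX.1])
      simp only [sh, C0_def]; linarith)
  have key := carleman hab ht hσ hm0 V U S (sh κ (pdx u)) (pdt U)
    (fun X t => sh κ (pdt θ) X t + sh κ r X t * V X t)
    (fun X t => sh κ (pdx (pdt θ)) X t + (sh κ (pdx r) X t * V X t + sh κ r X t * U X t))
    (fun X t => (sh κ (pdt (pdt θ)) X t - k t * sh κ (pdx (pdt θ)) X t)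
      + ((sh κ (pdt r) X t - k t * sh κ (pdx r) X t) * V X t + sh κ r X t * S X t))
    (sh κ q) (sh κ (pdx q)) (fun X t => sh κ (pdt q) X t - k t * sh κ (pdx q) X t)
    (sh κ G0) (sh κ (pdx G0)) (fun X t => sh κ (pdt G0) X t - k t * sh κ (pdx G0) X t)
    (sh κ C0) (sh κ (pdx C0))
    (sh κ (fun x t => h (θ x t))) (sh κ (fun x t => - (h (θ x t) * r x t)))
    (sh κ (fun x t => r x t * h (θ x t) - γ₁))
    (sh κ (fun x t => pdt r x t - (r x t * h (θ x t) - γ₁) * r x t))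
    (sh κ (fun x t => - (c (θ x t) * r x t)))
    (sh κ (fun x t => - (c (θ x t) * pdx r x t)))
    (sh κ (fun x t => deriv c (θ x t) / c (θ x t) * pdt θ x t)) k
  have ckk : Continuous fun p : ℝ × ℝ => k p.2 := ck.comp continuous_snd
  have cV : Continuous (Function.uncurry V) := prim_cont b sU.cont
  have cS : Continuous (Function.uncurry S) := prim_cont b sU.pt.cont
  have shc : ∀ f : ℝ → ℝ → ℝ, Continuous (Function.uncurry f) →
      Continuous (Function.uncurry (sh κ f)) := by
    intro f hf
    have := hκ.continuous
    exact hf.comp (by fun_prop : Continuous fun p : ℝ × ℝ => (p.1 - κ p.2, p.2))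
  have cdc : Continuous (Function.uncurry fun x t => deriv c (θ x t)) :=
    (H.hc.continuous_deriv (by simp)).comp H.hθ.cont
  have Vvan : ∀ X t, (∀ y, min X b ≤ y → Van u θ (y - κ t) t) → V X t = 0 := by
    intro X t hy
    simp only [V_def, prim]
    refine (intervalIntegral.integral_congr (g := fun _ => (0 : ℝ)) fun y h => ?_).trans (by simp)
    refine (hy y ?_).1
    rw [uIcc_comm, uIcc, mem_Icc] at h
    exact h.1
  have zz : ∀ X t, (∀ y, min X b ≤ y → Van u θ (y - κ t) t) →
      V X t = 0 ∧ U X t = 0 ∧ sh κ (pdt θ) X t + sh κ r X t * V X t = 0 ∧ sh κ q X t = 0 := by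
    intro X t hy
    have h1 := Vvan X t hy
    have h2 := hy X (min_le_left _ _)
    refine ⟨h1, h2.1, ?_, ?_⟩
    · simp only [sh, h1, h2.2.2]; simp
    · simp only [sh, q_def, h2.2.1]; simp
  have key := key cV sU.cont cS (shc _ H.hu.px.cont) sU.pt.cont
    ((shc _ H.hθ.pt.cont).add ((shc _ sρ.cont).mul cV))
    ((shc _ H.hθ.pt.px.cont).add (((shc _ sρ.px.cont).mul cV).add ((shc _ sρ.cont).mul sU.cont)))
    (((shc _ H.hθ.pt.pt.cont).sub (ckk.mul (shc _ H.hθ.pt.px.cont))).add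
      ((((shc _ sρ.pt.cont).sub (ckk.mul (shc _ sρ.px.cont))).mul cV).add
        ((shc _ sρ.cont).mul cS)))
    (shc _ sq.cont) (shc _ sq.px.cont)
    ((shc _ sq.pt.cont).sub (ckk.mul (shc _ sq.px.cont)))
    (shc _ sg.cont) (shc _ sg.px.cont)
    ((shc _ sg.pt.cont).sub (ckk.mul (shc _ sg.px.cont)))
    (shc _ sc.cont) (shc _ sc.px.cont)
    (shc _ shh.cont) (shc _ (shh.cont.mul sρ.cont).neg)
    (shc _ ((sρ.cont.mul shh.cont).sub continuous_const))
    (shc _ (sρ.pt.cont.sub (((sρ.cont.mul shh.cont).sub continuous_const).mul sρ.cont)))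
    (shc _ (sc.cont.mul sρ.cont).neg) (shc _ (sc.cont.mul sρ.px.cont).neg)
    (shc _ ((cdc.div sc.cont (fun p => (H.cpos _).ne')).mul H.hθ.pt.cont)) ck
  have key := key (fun X t => prim_dx b sU.cont X t) (fun X t => prim_dt b sU X t)
    (fun X t => H.hu.sh_dx X t) dUt (fun X t => prim_dx b sU.pt.cont X t)
    (fun X t => (H.hθ.pt.sh_dx X t).add ((sρ.sh_dx X t).mul (prim_dx b sU.cont X t)))
    (fun X t => (H.hθ.pt.sh_dt hκ X t).add ((sρ.sh_dt hκ X t).mul (prim_dt b sU X t)))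
    (fun X t => sq.sh_dx X t) (fun X t => sq.sh_dt hκ X t)
    (fun X t => sg.sh_dx X t) (fun X t => sg.sh_dt hκ X t) (fun X t => sc.sh_dx X t)
  have key := key (by
      intro X _ t h
      rw [eSS X t h]
      simp only [sh, fl_def, G0_def, U_def, r_def]
      ring) (by
      intro X _ t h7
      rw [eSS X t h7]
      have hw := H.wave (X - κ t) t (Icc0 t h7)
      have hgp := (H.gpos (θ (X - κ t) t)).ne'
      have hr : r (X - κ t) t * g (θ (X - κ t) t) = h (θ (X - κ t) t) := by
        simp only [r_def, hρ_def]; field_simp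
      simp only [sh, fl_def, U_def, C0_def]
      linear_combination hw + pdx u (X - κ t) t * hr) (by
      intro X _ t h
      have hcp := (H.cpos (θ (X - κ t) t)).ne'
      simp only [sh, C0_def, U_def]
      rw [qt]
      simp only [q_def]
      field_simp
      ring)
  have key := key (fun X hX t h => (hm X hX t h).trans (min_le_left _ _)) (by
      intro X hX t h
      refine (hm X hX t h).trans ((min_le_right _ _).trans ?_)
      have : |sh κ C0 X t| = sh κ C0 X t := abs_of_pos (H.cpos _)
      rw [this]
      linarith [hs t h])
    (fun X hX => zz X t0 fun y hy => hz0 _ (by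
      rw [min_eq_left hX.2] at hy; linarith [hX.1]))
    (fun X hX => zz X t1 fun y hy => hz1 _ (by
      rw [min_eq_left hX.2] at hy; linarith [hX.1]))
    (fun t h => zz b t fun y hy => hN t h _ (by
      rw [min_self] at hy; linarith [hbN t h]))
  intro t h x hx
  rcases lt_or_ge (x + κ t) b with hxb | hxb
  · have hxx : x + κ t - κ t = x := by ring
    obtain ⟨k1, k2, k3⟩ := key (x + κ t) ⟨hx, hxb⟩ t h
    have hV : (fun y => V y t) =ᶠ[𝓝 (x + κ t)] fun _ => 0 := by
      filter_upwards [Ioo_mem_nhds hx hxb] with y hy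
      exact (key y hy t h).1
    have hU : U (x + κ t) t = 0 := by
      rw [← (prim_dx b sU.cont (x + κ t) t).deriv, hV.deriv_eq]; simp
    simp only [k1, mul_zero, add_zero, sh, hxx] at k2
    simp only [sh, hxx, q_def] at k3
    simp only [U_def, sh, hxx] at hU
    exact ⟨hU, (mul_eq_zero.1 k3).resolve_left (H.cpos _).ne', k2⟩
  · exact hN t h x (by linarith [hbN t h])

open Set Filter Topology MeasureTheory

lemma const_of_deriv_Ioo {f f' : ℝ → ℝ} (hf : ∀ x, HasDerivAt f (f' x) x) {x y : ℝ} (hxy : x ≤ y)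
    (h0 : ∀ z ∈ Ioo x y, f' z = 0) : f x = f y := by
  rcases hxy.eq_or_lt with rfl | hlt
  · rfl
  obtain ⟨z, hz, he⟩ := exists_hasDerivAt_eq_slope f f' hlt
    (fun z _ => (hf z).continuousAt.continuousWithinAt) (fun z _ => hf z)
  rw [h0 z hz, eq_div_iff (by linarith)] at he
  linarith

theorem speed_core {γ₁ : ℝ} {g h c : ℝ → ℝ} {u θ : ℝ → ℝ → ℝ} (H : Sys γ₁ g h c u θ)
    {κ : ℝ → ℝ} (hκ : ContDiff ℝ (⊤ : ℕ∞) κ) {t0 t1 N σ s : ℝ} (h0 : 0 ≤ t0) (ht : t0 < t1)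
    (hσ : σ = 1 ∨ σ = -1)
    (hN : ∀ t ∈ Icc t0 t1, ∀ x, N ≤ x → Van u θ x t)
    (hz0 : ∀ x, 0 ≤ x + κ t0 → Van u θ x t0)
    (hz1 : ∀ x, 0 ≤ x + κ t1 → Van u θ x t1)
    (hs : ∀ t ∈ Icc t0 t1, s ≤ σ * deriv κ t)
    (hcs : c (θ N t0) < s) :
    ∀ t ∈ Icc t0 t1, ∀ x, 0 < x + κ t → Van u θ x t := by
  obtain ⟨K, hK⟩ : ∃ K, ∀ t ∈ Icc t0 t1, |κ t| ≤ K := by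
    obtain ⟨K, hK⟩ := isCompact_Icc.exists_bound_of_continuousOn
      (s := Icc t0 t1) hκ.continuous.continuousOn
    exact ⟨K, fun t h => hK t h⟩
  set A : Set ℝ := {M | 0 ≤ M ∧ ∀ t ∈ Icc t0 t1, ∀ x, M < x + κ t → Van u θ x t} with A_def
  have hK0 : 0 ≤ K := (abs_nonneg _).trans (hK t0 (left_mem_Icc.2 ht.le))
  have hne : A.Nonempty := by
    refine ⟨|N| + K, by positivity, fun t h x hx => hN t h x ?_⟩
    linarith [le_abs_self N, le_abs_self (κ t), hK t h]
  have hbd : BddBelow A := ⟨0, fun M hM => hM.1⟩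
  set M := sInf A with M_def
  have hM0 : 0 ≤ M := le_csInf hne fun M hM => hM.1
  have hMA : ∀ t ∈ Icc t0 t1, ∀ x, M < x + κ t → Van u θ x t := by
    intro t h x hx
    obtain ⟨M', hM', hlt⟩ := exists_lt_of_csInf_lt hne hx
    exact hM'.2 t h x hlt
  rcases hM0.eq_or_lt with he | hpos
  · rw [← he] at hMA; exact hMA
  exfalso
  -- θ is constant to the right of the front
  have hth : ∀ t ∈ Icc t0 t1, ∀ x, M ≤ x + κ t → θ x t = θ N t0 := by
    intro t h x hx
    have e1 : θ x t = θ (max x N) t :=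
      const_of_deriv_Ioo (fun y => H.hθ.dx y t) (le_max_left _ _)
        fun z hz => (hMA t h z (by linarith [hz.1])).2.1
    have e2 : θ N t = θ (max x N) t :=
      const_of_deriv_Ioo (fun y => H.hθ.dx y t) (le_max_right _ _)
        fun z hz => (hN t h z hz.1.le).2.1
    have e3 : θ N t0 = θ N t :=
      const_of_deriv_Ioo (fun τ => H.hθ.dt N τ) h.1
        fun z hz => (hN z ⟨hz.1.le, hz.2.le.trans h.2⟩ N le_rfl).2.2
    rw [e1, ← e2, ← e3]
  have sc := Sm.comp H.hc H.hθ
  obtain ⟨L, hL⟩ := rect_bound (M - 1) M t0 t1 (sh κ (pdx fun x t => c (θ x t)))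
    (sc.px.sh hκ).cont
  have hL0 : 0 ≤ L := (abs_nonneg _).trans
    (hL M ⟨by linarith, le_rfl⟩ t0 (left_mem_Icc.2 ht.le))
  obtain ⟨δ, hδ0, hδ1, hδM, hδ⟩ : ∃ δ, 0 < δ ∧ δ ≤ 1 ∧ δ ≤ M ∧ c (θ N t0) + L * δ < s := by
    refine ⟨min (min 1 M) ((s - c (θ N t0)) / (L + 1) / 2), ?_, ?_, ?_, ?_⟩
    · refine lt_min (lt_min one_pos hpos) ?_
      have : 0 < s - c (θ N t0) := by linarith
      positivity
    · exact (min_le_left _ _).trans (min_le_left _ _)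
    · exact (min_le_left _ _).trans (min_le_right _ _)
    · have hp : 0 < s - c (θ N t0) := by linarith
      have h1 : L * min (min 1 M) ((s - c (θ N t0)) / (L + 1) / 2) ≤
          L * ((s - c (θ N t0)) / (L + 1) / 2) :=
        mul_le_mul_of_nonneg_left (min_le_right _ _) hL0
      have h2 : L * ((s - c (θ N t0)) / (L + 1) / 2) < s - c (θ N t0) := by
        have : (s - c (θ N t0)) / (L + 1) / 2 * (L + 1) = (s - c (θ N t0)) / 2 := by
          field_simp
        have h3 : 0 < (s - c (θ N t0)) / (L + 1) / 2 := by positivity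
        nlinarith
      linarith
  have hcore := core H hκ (a := M - δ) h0 ht hσ hN
    (fun x hx => hz0 x (by linarith)) (fun x hx => hz1 x (by linarith)) hs (by
      intro t h x hx
      rcases le_or_gt M (x + κ t) with hge | hlt
      · rw [hth t h x hge]; exact hcs
      have hmv := (convex_Icc (M - 1) M).norm_image_sub_le_of_norm_hasDerivWithin_le
        (f := fun X => sh κ (fun x t => c (θ x t)) X t)
        (f' := fun X => sh κ (pdx fun x t => c (θ x t)) X t) (C := L)
        (fun X _ => (sc.sh_dx X t).hasDerivWithinAt) (fun X hX => hL X hX t h)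
        (x := M) (y := x + κ t) ⟨by linarith, le_rfl⟩ ⟨by linarith, hlt.le⟩
      have e1 : sh κ (fun x t => c (θ x t)) M t = c (θ N t0) := by
        simp only [sh]; rw [hth t h _ (by linarith)]
      have e2 : sh κ (fun x t => c (θ x t)) (x + κ t) t = c (θ x t) := by
        simp [sh]
      simp only [e1, e2, Real.norm_eq_abs] at hmv
      have h4 : |x + κ t - M| ≤ δ := by
        rw [abs_of_neg (by linarith)]; linarith
      have h5 := mul_le_mul_of_nonneg_left h4 hL0
      linarith [le_abs_self (c (θ x t) - c (θ N t0))])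
  have : M ≤ M - δ := csInf_le hbd ⟨by linarith, hcore⟩
  linarith

lemma van_closed {u θ : ℝ → ℝ → ℝ} (hu : Sm u) (hθ : Sm θ) (x : ℝ) :
    IsClosed {t | Van u θ x t} := by
  have c1 : ∀ f : ℝ → ℝ → ℝ, Sm f → Continuous fun t => f x t := fun f hf =>
    hf.cont.comp (by fun_prop : Continuous fun t : ℝ => (x, t))
  exact (isClosed_eq (c1 _ hu) continuous_const).inter
    ((isClosed_eq (c1 _ hθ.px) continuous_const).inter (isClosed_eq (c1 _ hθ.pt) continuous_const))

lemma exists_exp_small {K d ε : ℝ} (hd : 0 < d) (hε : 0 < ε) :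
    ∃ L, 0 ≤ L ∧ K * Real.exp (-(L * d)) < ε := by
  have h1 : Tendsto (fun L : ℝ => K * Real.exp (-(L * d))) atTop (𝓝 (K * 0)) := by
    refine Tendsto.const_mul _ (Real.tendsto_exp_neg_atTop_nhds_zero.comp ?_)
    exact tendsto_id.atTop_mul_const hd
  rw [mul_zero] at h1
  obtain ⟨L, h2, h3⟩ := ((h1.eventually (gt_mem_nhds hε)).and (eventually_ge_atTop 0)).exists
  exact ⟨L, h3, h2⟩

theorem speed_back {γ₁ : ℝ} {g h c : ℝ → ℝ} {u θ : ℝ → ℝ → ℝ} (H : Sys γ₁ g h c u θ)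
    {t0 t1 N s r : ℝ} (h0 : 0 ≤ t0) (ht : t0 < t1)
    (hN : ∀ t ∈ Icc t0 t1, ∀ x, N ≤ x → Van u θ x t)
    (hr : ∀ x, r ≤ x → Van u θ x t1) (hcs : c (θ r t1) < s) :
    ∀ t ∈ Icc t0 t1, ∀ x, r + s * (t1 - t0) < x → Van u θ x t := by
  have hs0 : 0 < s := (H.cpos _).trans hcs
  have hcs' : c (θ N t0) < s := by
    have e1 : θ r t1 = θ (max r N) t1 :=
      const_of_deriv_Ioo (fun y => H.hθ.dx y t1) (le_max_left _ _)
        fun z hz => (hr z hz.1.le).2.1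
    have e2 : θ N t1 = θ (max r N) t1 :=
      const_of_deriv_Ioo (fun y => H.hθ.dx y t1) (le_max_right _ _)
        fun z hz => (hN t1 (right_mem_Icc.2 ht.le) z hz.1.le).2.1
    have e3 : θ N t0 = θ N t1 :=
      const_of_deriv_Ioo (fun τ => H.hθ.dt N τ) ht.le
        fun z hz => (hN z ⟨hz.1.le, hz.2.le⟩ N le_rfl).2.2
    rwa [e3, e2, ← e1]
  have main : ∀ t ∈ Ioc t0 t1, ∀ x, r + s * (t1 - t0) < x → Van u θ x t := by
    intro t h x hx
    obtain ⟨K, hK0, hK⟩ : ∃ K : ℝ, 0 ≤ K ∧ N - r - s * (t1 - t0) ≤ K :=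
      ⟨max 0 _, le_max_left _ _, le_max_right _ _⟩
    have hst : s * (t1 - t) ≤ s * (t1 - t0) := by nlinarith [h.1]
    obtain ⟨L, hL0, hL⟩ := exists_exp_small (K := K) (d := t - t0)
      (ε := x - r - s * (t1 - t)) (by linarith [h.1]) (by linarith)
    have hd : ∀ τ, HasDerivAt (fun τ => -r - s * (t1 - τ) - K * Real.exp (-(L * (τ - t0))))
        (s + K * L * Real.exp (-(L * (τ - t0)))) τ := by
      intro τ
      have h1 : HasDerivAt (fun τ => -(L * (τ - t0))) (-L) τ := by
        exact (((hasDerivAt_id τ).sub_const t0).const_mul L).neg.congr_deriv (by ring)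
      have h2 : HasDerivAt (fun τ => s * (t1 - τ)) (-s) τ := by
        simpa using ((hasDerivAt_id τ).const_sub t1).const_mul s
      refine ((h2.const_sub (-r)).sub (h1.exp.const_mul K)).congr_deriv ?_
      ring
    have hκ : ContDiff ℝ (⊤ : ℕ∞)
        (fun τ => -r - s * (t1 - τ) - K * Real.exp (-(L * (τ - t0)))) := by fun_prop
    refine speed_core H hκ (σ := 1) (s := s) h0 ht (Or.inl rfl) hN ?_ ?_ ?_ hcs' t ⟨h.1.le, h.2⟩ x ?_
    · intro y hy
      refine hN t0 (left_mem_Icc.2 ht.le) y ?_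
      simp at hy; linarith
    · intro y hy
      refine hr y ?_
      have : 0 ≤ K * Real.exp (-(L * (t1 - t0))) := by positivity
      simp at hy; linarith
    · intro τ _
      rw [(hd τ).deriv]
      have : 0 ≤ K * L * Real.exp (-(L * (τ - t0))) := by positivity
      linarith
    · linarith
  intro t h x hx
  have hcl : Icc t0 t1 ⊆ {t | Van u θ x t} := by
    rw [← closure_Ioc ht.ne]
    exact closure_minimal (fun t h => main t h x hx) (van_closed H.hu H.hθ x)
  exact hcl h

theorem speed_fwd {γ₁ : ℝ} {g h c : ℝ → ℝ} {u θ : ℝ → ℝ → ℝ} (H : Sys γ₁ g h c u θ)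
    {t0 t1 N s r : ℝ} (h0 : 0 ≤ t0) (ht : t0 < t1)
    (hN : ∀ t ∈ Icc t0 t1, ∀ x, N ≤ x → Van u θ x t)
    (hr : ∀ x, r ≤ x → Van u θ x t0) (hcs : c (θ r t0) < s) :
    ∀ t ∈ Icc t0 t1, ∀ x, r + s * (t1 - t0) < x → Van u θ x t := by
  have hs0 : 0 < s := (H.cpos _).trans hcs
  have hcs' : c (θ N t0) < s := by
    have e1 : θ r t0 = θ (max r N) t0 :=
      const_of_deriv_Ioo (fun y => H.hθ.dx y t0) (le_max_left _ _)
        fun z hz => (hr z hz.1.le).2.1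
    have e2 : θ N t0 = θ (max r N) t0 :=
      const_of_deriv_Ioo (fun y => H.hθ.dx y t0) (le_max_right _ _)
        fun z hz => (hN t0 (left_mem_Icc.2 ht.le) z hz.1.le).2.1
    rwa [e2, ← e1]
  have main : ∀ t ∈ Ico t0 t1, ∀ x, r + s * (t1 - t0) < x → Van u θ x t := by
    intro t h x hx
    obtain ⟨K, hK0, hK⟩ : ∃ K : ℝ, 0 ≤ K ∧ N - r - s * (t1 - t0) ≤ K :=
      ⟨max 0 _, le_max_left _ _, le_max_right _ _⟩
    have hst : s * (t - t0) ≤ s * (t1 - t0) := by nlinarith [h.2]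
    obtain ⟨L, hL0, hL⟩ := exists_exp_small (K := K) (d := t1 - t)
      (ε := x - r - s * (t - t0)) (by linarith [h.2]) (by linarith)
    have hd : ∀ τ, HasDerivAt (fun τ => -r - s * (τ - t0) - K * Real.exp (-(L * (t1 - τ))))
        (-s - K * L * Real.exp (-(L * (t1 - τ)))) τ := by
      intro τ
      have h1 : HasDerivAt (fun τ => -(L * (t1 - τ))) (L) τ := by
        exact (((hasDerivAt_id τ).const_sub t1).const_mul L).neg.congr_deriv (by ring)
      have h2 : HasDerivAt (fun τ => s * (τ - t0)) (s) τ := by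
        simpa using ((hasDerivAt_id τ).sub_const t0).const_mul s
      refine ((h2.const_sub (-r)).sub (h1.exp.const_mul K)).congr_deriv ?_
      ring
    have hκ : ContDiff ℝ (⊤ : ℕ∞)
        (fun τ => -r - s * (τ - t0) - K * Real.exp (-(L * (t1 - τ)))) := by fun_prop
    refine speed_core H hκ (σ := -1) (s := s) h0 ht (Or.inr rfl) hN ?_ ?_ ?_ hcs' t ⟨h.1, h.2.le⟩ x ?_
    · intro y hy
      refine hr y ?_
      have : 0 ≤ K * Real.exp (-(L * (t1 - t0))) := by positivity
      simp at hy; linarith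
    · intro y hy
      refine hN t1 (right_mem_Icc.2 ht.le) y ?_
      simp at hy; linarith
    · intro τ _
      rw [(hd τ).deriv]
      have : 0 ≤ K * L * Real.exp (-(L * (t1 - τ))) := by positivity
      linarith
    · linarith
  intro t h x hx
  have hcl : Icc t0 t1 ⊆ {t | Van u θ x t} := by
    rw [← closure_Ico ht.ne]
    exact closure_minimal (fun t h => main t h x hx) (van_closed H.hu H.hθ x)
  exact hcl h

open Set Filter Topology MeasureTheory

/-- Spatial reflection. -/
def rfl' (f : ℝ → ℝ → ℝ) : ℝ → ℝ → ℝ := fun x t => f (-x) t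

lemma Sm.refl {f : ℝ → ℝ → ℝ} (hf : Sm f) : Sm (rfl' f) := by
  have : Function.uncurry (rfl' f) = Function.uncurry f ∘ fun p : ℝ × ℝ => (-p.1, p.2) := rfl
  unfold Sm; rw [this]
  exact ContDiff.comp hf (contDiff_fst.neg.prodMk contDiff_snd)

lemma pdx_refl (f : ℝ → ℝ → ℝ) (x t : ℝ) : pdx (fun y s => f (-y) s) x t = - pdx f (-x) t := by
  unfold pdx
  exact deriv_comp_neg (fun y => f y t) x

lemma pdx_refl_neg (f : ℝ → ℝ → ℝ) (x t : ℝ) : pdx (fun y s => - f (-y) s) x t = pdx f (-x) t := by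
  have : pdx (fun y s => - f (-y) s) x t = - pdx (fun y s => f (-y) s) x t := by
    unfold pdx
    exact deriv.fun_neg
  rw [this, pdx_refl, neg_neg]

lemma pdt_refl_neg (f : ℝ → ℝ → ℝ) (x t : ℝ) : pdt (fun y s => - f (-y) s) x t = - pdt f (-x) t := by
  unfold pdt
  exact deriv.fun_neg

theorem Sys.refl {γ₁ : ℝ} {g h c : ℝ → ℝ} {u θ : ℝ → ℝ → ℝ} (H : Sys γ₁ g h c u θ) :
    Sys γ₁ g h c (fun x t => - u (-x) t) (fun x t => θ (-x) t) where
  hg := H.hg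
  hh := H.hh
  hc := H.hc
  gpos := H.gpos
  cpos := H.cpos
  hu := ContDiff.neg H.hu.refl
  hθ := H.hθ.refl
  heat := by
    intro x t ht
    rw [pdt_refl_neg, H.heat _ _ ht, ← pdx_refl]
    congr 1
    funext y s
    rw [pdx_refl_neg]
    rfl
  wave := by
    intro x t ht
    have h1 : pdx (fun y s => c (θ (-y) s) * pdx (fun x t => θ (-x) t) y s) x t
        = pdx (fun y s => c (θ y s) * pdx θ y s) (-x) t := by
      rw [← pdx_refl_neg]
      congr 1
      funext y s
      rw [pdx_refl]; ring
    rw [h1, pdx_refl_neg]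
    exact H.wave (-x) t ht

lemma van_refl {u θ : ℝ → ℝ → ℝ} {x t : ℝ} :
    Van (fun x t => - u (-x) t) (fun x t => θ (-x) t) x t ↔ Van u θ (-x) t := by
  unfold Van
  rw [pdx_refl, neg_eq_zero, neg_eq_zero]
  rfl

/-- Vanishing outside of a symmetric interval. -/
def Wv (u θ : ℝ → ℝ → ℝ) (R t : ℝ) : Prop := ∀ x, R ≤ |x| → Van u θ x t

lemma Wv.mono {u θ : ℝ → ℝ → ℝ} {R R' t : ℝ} (h : Wv u θ R t) (hR : R ≤ R') : Wv u θ R' t :=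
  fun x hx => h x (hR.trans hx)

theorem speed1 {γ₁ : ℝ} {g h c : ℝ → ℝ} {u θ : ℝ → ℝ → ℝ} (H : Sys γ₁ g h c u θ)
    {e f N s r : ℝ} (h0 : 0 ≤ e) (h0' : 0 ≤ f) (hef : e ≠ f)
    (hN : ∀ t ∈ uIcc e f, ∀ x, N ≤ x → Van u θ x t)
    (hr : ∀ x, r ≤ x → Van u θ x e) (hcs : c (θ r e) < s) :
    ∀ t ∈ uIcc e f, ∀ x, r + s * |f - e| < x → Van u θ x t := by
  rcases lt_or_gt_of_ne hef with hlt | hlt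
  · rw [uIcc_of_le hlt.le] at hN ⊢
    rw [abs_of_pos (by linarith)]
    exact speed_fwd H h0 hlt hN hr hcs
  · rw [uIcc_of_ge hlt.le] at hN ⊢
    rw [abs_of_neg (by linarith), neg_sub]
    exact speed_back H h0' hlt hN hr hcs

theorem speed2 {γ₁ : ℝ} {g h c : ℝ → ℝ} {u θ : ℝ → ℝ → ℝ} (H : Sys γ₁ g h c u θ)
    {e f N s r : ℝ} (h0 : 0 ≤ e) (h0' : 0 ≤ f) (hef : e ≠ f)
    (hN : ∀ t ∈ uIcc e f, Wv u θ N t) (hr : Wv u θ r e)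
    (hcs : c (θ r e) < s) (hcs' : c (θ (-r) e) < s) :
    ∀ t ∈ uIcc e f, Wv u θ (r + s * |f - e| + 1) t := by
  have h1 := speed1 H h0 h0' hef (fun t ht x hx => hN t ht x (hx.trans (le_abs_self x)))
    (fun x hx => hr x (hx.trans (le_abs_self x))) hcs
  have h2 := speed1 H.refl h0 h0' hef (N := N) (r := r) (s := s)
    (fun t ht x hx => van_refl.2 (hN t ht (-x) (hx.trans (by rw [abs_neg]; exact le_abs_self x))))
    (fun x hx => van_refl.2 (hr (-x) (hx.trans (by rw [abs_neg]; exact le_abs_self x)))) hcs'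
  intro t ht x hx
  rcases le_total 0 x with hx0 | hx0
  · rw [abs_of_nonneg hx0] at hx
    exact h1 t ht x (by linarith)
  · rw [abs_of_nonpos hx0] at hx
    have := van_refl.1 (h2 t ht (-x) (by linarith))
    rwa [neg_neg] at this

/-- Locally uniformly bounded support near time `t`. -/
def LB (u θ : ℝ → ℝ → ℝ) (t : ℝ) : Prop :=
  ∃ ε > 0, ∃ R, ∀ τ, 0 ≤ τ → |τ - t| < ε → Wv u θ R τ

lemma LB.unif {u θ : ℝ → ℝ → ℝ} {p q : ℝ} (hp : 0 ≤ p) (h : ∀ t ∈ Icc p q, LB u θ t) :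
    ∃ R, ∀ t ∈ Icc p q, Wv u θ R t := by
  refine isCompact_Icc.induction_on (p := fun s => ∃ R, ∀ t ∈ s ∩ Icc p q, Wv u θ R t) ?_ ?_ ?_ ?_
    |>.imp fun R hR t ht => hR t ⟨ht, ht⟩
  · exact ⟨0, by simp⟩
  · rintro s s' hss ⟨R, hR⟩
    exact ⟨R, fun t ht => hR t ⟨hss ht.1, ht.2⟩⟩
  · rintro s s' ⟨R, hR⟩ ⟨R', hR'⟩
    refine ⟨max R R', ?_⟩
    rintro t ⟨ht | ht, ht'⟩
    · exact (hR t ⟨ht, ht'⟩).mono (le_max_left _ _)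
    · exact (hR' t ⟨ht, ht'⟩).mono (le_max_right _ _)
  · intro t ht
    obtain ⟨ε, hε, R, hR⟩ := h t ht
    refine ⟨Metric.ball t ε, mem_nhdsWithin_of_mem_nhds (Metric.ball_mem_nhds t hε), R, ?_⟩
    rintro τ ⟨h1, h2⟩
    exact hR τ (hp.trans h2.1) h1

theorem gap {γ₁ : ℝ} {g h c : ℝ → ℝ} {u θ : ℝ → ℝ → ℝ} (H : Sys γ₁ g h c u θ)
    (hS : ∀ t, 0 ≤ t → ∃ R, Wv u θ R t)
    {e f s r : ℝ} (h0 : 0 ≤ e) (h0' : 0 ≤ f) (hef : e ≠ f)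
    (hLB : ∀ t ∈ uIcc e f, t ≠ e → LB u θ t) (hr : Wv u θ r e)
    (hcs : c (θ r e) < s) (hcs' : c (θ (-r) e) < s) :
    Wv u θ (r + s * |f - e| + 1) f := by
  obtain ⟨r', hr'⟩ := hS f h0'
  set s' := max (c (θ r' f)) (c (θ (-r') f)) + 1 with s'_def
  have hs1 : c (θ r' f) < s' := by linarith [le_max_left (c (θ r' f)) (c (θ (-r') f))]
  have hs2 : c (θ (-r') f) < s' := by linarith [le_max_right (c (θ r' f)) (c (θ (-r') f))]
  have hs0 : 0 < s' := (H.cpos _).trans hs1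
  have hbd : ∀ t ∈ uIcc e f, Wv u θ (max r (r' + s' * |f - e| + 1)) t := by
    intro t ht
    by_cases hte : t = e
    · rw [hte]; exact hr.mono (le_max_left _ _)
    refine Wv.mono ?_ (le_max_right _ _)
    by_cases htf : t = f
    · rw [htf]; exact hr'.mono (by nlinarith [abs_nonneg (f - e)])
    have hsub : ∀ τ ∈ uIcc f t, τ ∈ uIcc e f ∧ τ ≠ e := by
      intro τ hτ
      rw [mem_uIcc] at hτ ht ⊢
      constructor
      · rcases hτ with hτ | hτ <;> rcases ht with ht | ht
        · left; constructor <;> linarith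
        · right; constructor <;> linarith
        · left; constructor <;> linarith
        · right; constructor <;> linarith
      · rintro rfl
        rcases hτ with hτ | hτ <;> rcases ht with ht | ht
        · exact hef (le_antisymm (by linarith) (by linarith))
        · exact hte (le_antisymm (by linarith) (by linarith))
        · exact hte (le_antisymm (by linarith) (by linarith))
        · exact hef (le_antisymm (by linarith) (by linarith))
    have ht0 : 0 ≤ t := by
      rcases mem_uIcc.1 ht with h | h <;> linarith
    obtain ⟨N, hN⟩ := LB.unif (u := u) (θ := θ) (p := min f t) (q := max f t) (le_min h0' ht0)
      (fun τ hτ => hLB τ (hsub τ hτ).1 (hsub τ hτ).2)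
    refine (speed2 H h0' ht0 (Ne.symm htf) hN hr' hs1 hs2 t right_mem_uIcc).mono ?_
    have : |t - f| ≤ |f - e| := by
      rcases mem_uIcc.1 ht with h | h
      · rw [abs_of_nonpos (by linarith), abs_of_nonneg (by linarith)]; linarith
      · rw [abs_of_nonneg (by linarith), abs_of_nonpos (by linarith)]; linarith
    nlinarith
  exact speed2 H h0 h0' hef hbd hr hcs hcs' f right_mem_uIcc

theorem all_LB {γ₁ : ℝ} {g h c : ℝ → ℝ} {u θ : ℝ → ℝ → ℝ} (H : Sys γ₁ g h c u θ)
    (hS : ∀ t, 0 ≤ t → ∃ R, Wv u θ R t) : ∀ t, 0 ≤ t → LB u θ t := by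
  set F : Set ℝ := {t | 0 ≤ t ∧ ¬ LB u θ t} with F_def
  have hFc : IsClosed F := by
    have h1 : IsOpen {t | LB u θ t} := by
      rw [Metric.isOpen_iff]
      rintro t ⟨ε, hε, R, hR⟩
      refine ⟨ε / 2, by linarith, fun τ hτ => ⟨ε / 2, by linarith, R, fun z hz hzτ => ?_⟩⟩
      refine hR z hz ?_
      rw [Metric.mem_ball, Real.dist_eq] at hτ
      have := abs_sub_le z τ t
      linarith
    exact isClosed_Ici.inter h1.isClosed_compl
  by_contra hcon
  push Not at hcon
  obtain ⟨t₀, ht₀, hnt₀⟩ := hcon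
  have hne : Nonempty F := ⟨⟨t₀, ht₀, hnt₀⟩⟩
  have : CompleteSpace F := hFc.completeSpace_coe
  have hcl : ∀ n : ℕ, IsClosed {t : F | Wv u θ n t} := by
    intro n
    have : {t : F | Wv u θ n t} = ⋂ x : ℝ, ⋂ _ : (n : ℝ) ≤ |x|, {t : F | Van u θ x t} := by
      ext t; simp [Wv]
    rw [this]
    exact isClosed_iInter fun x => isClosed_iInter fun _ =>
      (van_closed H.hu H.hθ x).preimage continuous_subtype_val
  have hun : ⋃ n : ℕ, {t : F | Wv u θ n t} = univ := by
    rw [eq_univ_iff_forall]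
    intro t
    obtain ⟨R, hR⟩ := hS t t.2.1
    obtain ⟨n, hn⟩ := exists_nat_ge R
    exact mem_iUnion.2 ⟨n, hR.mono hn⟩
  obtain ⟨n, tt, htt⟩ := nonempty_interior_of_iUnion_of_closed hcl hun
  obtain ⟨ε, hε, hball⟩ := Metric.mem_nhds_iff.1 (mem_interior_iff_mem_nhds.1 htt)
  obtain ⟨ts, hts⟩ := tt
  have hn : ∀ t ∈ F, |t - ts| < ε → Wv u θ n t := by
    intro t ht hd
    have : (⟨t, ht⟩ : F) ∈ Metric.ball (⟨ts, hts⟩ : F) ε := hd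
    exact hball this
  obtain ⟨s, hs0, hs⟩ : ∃ s, 0 < s ∧ ∀ t, |t - ts| < ε → c (θ n t) < s ∧ c (θ (-n) t) < s := by
    have cc : ∀ x, Continuous fun t => c (θ x t) := fun x =>
      H.hc.continuous.comp (H.hθ.cont.comp (by fun_prop : Continuous fun t : ℝ => (x, t)))
    obtain ⟨K1, hK1⟩ := (isCompact_Icc (a := ts - ε) (b := ts + ε)).exists_bound_of_continuousOn
      (cc n).continuousOn
    obtain ⟨K2, hK2⟩ := (isCompact_Icc (a := ts - ε) (b := ts + ε)).exists_bound_of_continuousOn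
      (cc (-n)).continuousOn
    refine ⟨max 0 (max K1 K2) + 1, by positivity, fun t ht => ?_⟩
    have hm : t ∈ Icc (ts - ε) (ts + ε) := by
      rw [abs_lt] at ht; constructor <;> linarith
    have a1 := (le_abs_self _).trans (hK1 t hm)
    have a2 := (le_abs_self _).trans (hK2 t hm)
    have b1 := le_max_left K1 K2
    have b2 := le_max_right K1 K2
    have b3 := le_max_right 0 (max K1 K2)
    constructor <;> linarith
  refine hts.2 ⟨ε, hε, n + s * ε + 1, fun τ hτ0 hτ => ?_⟩
  by_cases hτF : τ ∈ F
  · exact (hn τ hτF hτ).mono (by nlinarith)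
  obtain ⟨e, ⟨heI, heF⟩, hmin⟩ := (isCompact_uIcc.inter_right hFc).exists_isMinOn
    (s := uIcc ts τ ∩ F) ⟨ts, left_mem_uIcc, hts⟩
    (f := fun z => |z - τ|) (by fun_prop)
  have heτ : e ≠ τ := fun h => hτF (h ▸ heF)
  have hed : |e - ts| < ε := by
    refine lt_of_le_of_lt ?_ hτ
    exact abs_sub_left_of_mem_uIcc heI
  have hed' : |τ - e| ≤ ε := by
    refine le_trans ?_ hτ.le
    exact abs_sub_right_of_mem_uIcc heI
  refine (gap H hS heF.1 hτ0 heτ ?_ (hn e heF hed) (hs e hed).1 (hs e hed).2).mono (by nlinarith)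
  intro z hz hze
  by_contra hzL
  have hz0 : 0 ≤ z := by
    rcases mem_uIcc.1 hz with h | h
    · exact heF.1.trans h.1
    · exact hτ0.trans h.1
  have hzI : z ∈ uIcc ts τ := uIcc_subset_uIcc_right heI hz
  have hle : |e - τ| ≤ |z - τ| := hmin ⟨hzI, hz0, hzL⟩
  apply hze
  rcases mem_uIcc.1 hz with h | h
  · rw [abs_of_nonpos (by linarith), abs_of_nonpos (by linarith)] at hle; linarith
  · rw [abs_of_nonneg (by linarith), abs_of_nonneg (by linarith)] at hle; linarith

open Set Filter Topology MeasureTheory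

lemma exists_Wv {u θ : ℝ → ℝ → ℝ} {t : ℝ}
    (h : HasCompactSupport (fun x => u x t) ∧
      HasCompactSupport (fun x => pdx θ x t) ∧ HasCompactSupport (fun x => pdt θ x t)) :
    ∃ R, Wv u θ R t := by
  have key : ∀ f : ℝ → ℝ, HasCompactSupport f → ∃ R, ∀ x, R ≤ |x| → f x = 0 := by
    intro f hf
    obtain ⟨R, hR⟩ := hf.isCompact.isBounded.subset_closedBall 0
    refine ⟨R + 1, fun x hx => ?_⟩
    by_contra hne
    have := hR (subset_tsupport f hne)
    rw [mem_closedBall_zero_iff, Real.norm_eq_abs] at this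
    linarith
  obtain ⟨R1, h1⟩ := key _ h.1
  obtain ⟨R2, h2⟩ := key _ h.2.1
  obtain ⟨R3, h3⟩ := key _ h.2.2
  refine ⟨max R1 (max R2 R3), fun x hx => ⟨h1 x ?_, h2 x ?_, h3 x ?_⟩⟩
  · exact (le_max_left _ _).trans hx
  · exact ((le_max_left _ _).trans (le_max_right _ _)).trans hx
  · exact ((le_max_right _ _).trans (le_max_right _ _)).trans hx

theorem energy_le {γ₁ : ℝ} {g h c : ℝ → ℝ} {u θ : ℝ → ℝ → ℝ} (H : Sys γ₁ g h c u θ)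
    (hγ₁ : 0 < γ₁) (hb : ∀ s, 0 < γ₁ * g s - h s ^ 2)
    {s t N : ℝ} (hs : 0 ≤ s) (hst : s ≤ t) (hN : ∀ τ ∈ Icc s t, Wv u θ N τ) :
    (∫ x : ℝ, ((pdt θ x t) ^ 2 + c (θ x t) ^ 2 * (pdx θ x t) ^ 2 + (u x t) ^ 2)) ≤
      ∫ x : ℝ, ((pdt θ x s) ^ 2 + c (θ x s) ^ 2 * (pdx θ x s) ^ 2 + (u x s) ^ 2) := by
  obtain ⟨R, hR0, hRN⟩ : ∃ R, 0 < R ∧ N < R :=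
    ⟨|N| + 1, by positivity, by linarith [le_abs_self N]⟩
  have conv : ∀ τ ∈ Icc s t,
      ∫ x in (-R)..R, ((pdt θ x τ) ^ 2 + c (θ x τ) ^ 2 * (pdx θ x τ) ^ 2 + (u x τ) ^ 2) =
      ∫ x : ℝ, ((pdt θ x τ) ^ 2 + c (θ x τ) ^ 2 * (pdx θ x τ) ^ 2 + (u x τ) ^ 2) := by
    intro τ hτ
    apply intervalIntegral.integral_eq_integral_of_support_subset
    intro x hx
    by_contra hnx
    apply hx
    have : N ≤ |x| := by
      rw [mem_Ioc, not_and_or, not_lt, not_le] at hnx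
      rcases hnx with h | h
      · linarith [neg_abs_le x]
      · linarith [le_abs_self x]
    obtain ⟨e1, e2, e3⟩ := hN τ hτ x this
    simp [e1, e2, e3]
  have sg := Sm.comp H.hg H.hθ
  have shh := Sm.comp H.hh H.hθ
  have sc := Sm.comp H.hc H.hθ
  have sq : Sm (fun x t => c (θ x t) * pdx θ x t) := sc.mul H.hθ.px
  have sfl : Sm (fun y s => g (θ y s) * pdx u y s + h (θ y s) * pdt θ y s) :=
    (sg.mul H.hu.px).add (shh.mul H.hθ.pt)
  set fl : ℝ → ℝ → ℝ := fun y s => g (θ y s) * pdx u y s + h (θ y s) * pdt θ y s with fl_def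
  set q : ℝ → ℝ → ℝ := fun x t => c (θ x t) * pdx θ x t with q_def
  have sB : Sm (fun x t => (pdt θ x t) ^ 2 + c (θ x t) ^ 2 * (pdx θ x t) ^ 2 + (u x t) ^ 2) :=
    ((ContDiff.pow H.hθ.pt 2).add ((ContDiff.pow sc 2).mul (ContDiff.pow H.hθ.px 2))).add
      (ContDiff.pow H.hu 2)
  have sA : Sm (fun x t => -2 * ((c (θ x t) * q x t) * pdt θ x t + u x t * fl x t)) :=
    ContDiff.mul contDiff_const (((sc.mul sq).mul H.hθ.pt).add (H.hu.mul sfl))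
  set B : ℝ → ℝ → ℝ :=
    fun x t => (pdt θ x t) ^ 2 + c (θ x t) ^ 2 * (pdx θ x t) ^ 2 + (u x t) ^ 2 with B_def
  set A : ℝ → ℝ → ℝ :=
    fun x t => -2 * ((c (θ x t) * q x t) * pdt θ x t + u x t * fl x t) with A_def
  have dcx : ∀ x t, HasDerivAt (fun y => c (θ y t)) (deriv c (θ x t) * pdx θ x t) x := fun x t =>
    ((H.hc.differentiable (by simp) _).hasDerivAt).comp x (H.hθ.dx x t)
  have dct : ∀ x t, HasDerivAt (fun y => c (θ x y)) (deriv c (θ x t) * pdt θ x t) t := fun x t =>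
    ((H.hc.differentiable (by simp) _).hasDerivAt).comp t (H.hθ.dt x t)
  have eA : ∀ x t, pdx A x t = -2 * (((deriv c (θ x t) * pdx θ x t) * q x t
      + c (θ x t) * pdx q x t) * pdt θ x t + c (θ x t) * q x t * pdx (pdt θ) x t
      + (pdx u x t * fl x t + u x t * pdx fl x t)) := fun x t =>
    ((((dcx x t).mul (sq.dx x t)).mul (H.hθ.pt.dx x t)).add
      ((H.hu.dx x t).mul (sfl.dx x t)) |>.const_mul (-2)).deriv
  have eB : ∀ x t, pdt B x t = 2 * pdt θ x t * pdt (pdt θ) x t +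
      (2 * c (θ x t) * (deriv c (θ x t) * pdt θ x t) * (pdx θ x t) ^ 2
        + c (θ x t) ^ 2 * (2 * pdx θ x t * pdx (pdt θ) x t)) + 2 * u x t * pdt u x t := by
    intro x t
    rw [← H.hθ.comm]
    have := (((H.hθ.pt.dt x t).pow 2).add (((dct x t).pow 2).mul ((H.hθ.px.dt x t).pow 2))).add
      ((H.hu.dt x t).pow 2)
    refine Eq.trans this.deriv ?_
    simp
  have hneg : ∀ x, ∀ τ, 0 ≤ τ → pdx A x τ + pdt B x τ ≤ 0 := by
    intro x τ hτ
    have hw := H.wave x τ hτ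
    have hh := H.heat x τ hτ
    have e : pdx A x τ + pdt B x τ = -2 * (γ₁ * pdt θ x τ ^ 2 + 2 * h (θ x τ) * pdt θ x τ * pdx u x τ
        + g (θ x τ) * pdx u x τ ^ 2) := by
      rw [eA, eB, hh]
      have hw' : pdt (pdt θ) x τ = c (θ x τ) * pdx q x τ - h (θ x τ) * pdx u x τ
        - γ₁ * pdt θ x τ := by linarith
      rw [hw']
      simp only [fl_def, q_def]
      ring
    rw [e]
    have hbb := (hb (θ x τ)).le
    have : 0 ≤ γ₁ * (γ₁ * pdt θ x τ ^ 2 + 2 * h (θ x τ) * pdt θ x τ * pdx u x τ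
        + g (θ x τ) * pdx u x τ ^ 2) := by
      have h1 := mul_nonneg hbb (sq_nonneg (pdx u x τ))
      have h2 := sq_nonneg (γ₁ * pdt θ x τ + h (θ x τ) * pdx u x τ)
      nlinarith
    have := nonneg_of_mul_nonneg_right this hγ₁
    linarith
  have hdiv := div_rect (a := -R) (b := R) (t0 := s) (t1 := t) A B (pdx A) (pdt B)
    (fun x t => sA.dx x t) (fun x t => sB.dt x t) sA.px.cont sB.pt.cont
  have hL : ∫ x in (-R)..R, ∫ τ in s..t, (pdx A x τ + pdt B x τ) ≤ 0 := by
    have : 0 ≤ ∫ x in (-R)..R, -∫ τ in s..t, (pdx A x τ + pdt B x τ) := by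
      refine intervalIntegral.integral_nonneg (by linarith) fun x _ => ?_
      rw [← intervalIntegral.integral_neg]
      refine intervalIntegral.integral_nonneg hst fun τ hτ => ?_
      linarith [hneg x τ (hs.trans hτ.1)]
    rw [intervalIntegral.integral_neg] at this
    linarith
  have hbdry : ∫ τ in s..t, (A R τ - A (-R) τ) = 0 := by
    refine (intervalIntegral.integral_congr (g := fun _ => (0 : ℝ)) fun τ hτ => ?_).trans (by simp)
    rw [uIcc_of_le hst] at hτ
    have h1 := hN τ hτ R (by rw [abs_of_pos hR0]; exact hRN.le)
    have h2 := hN τ hτ (-R) (by rw [abs_neg, abs_of_pos hR0]; exact hRN.le)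
    simp only [A_def, h1.1, h1.2.2, h2.1, h2.2.2]
    ring
  have cB : ∀ τ, Continuous fun x => B x τ := fun τ =>
    sB.cont.comp (by fun_prop : Continuous fun x : ℝ => (x, τ))
  rw [hbdry, zero_add, intervalIntegral.integral_sub ((cB t).intervalIntegrable _ _)
    ((cB s).intervalIntegrable _ _)] at hdiv
  rw [← conv t (right_mem_Icc.2 hst), ← conv s (left_mem_Icc.2 hst)]
  have e1 : ∀ τ, ∫ x in (-R)..R, B x τ = ∫ x in (-R)..R,
    ((pdt θ x τ) ^ 2 + c (θ x τ) ^ 2 * (pdx θ x τ) ^ 2 + (u x τ) ^ 2) := fun τ => rfl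
  rw [← e1, ← e1]
  linarith


theorem stmt_4 (γ₁ : ℝ) (g h c : ℝ → ℝ)
    (hg : ContDiff ℝ (⊤ : ℕ∞) g) (hh : ContDiff ℝ (⊤ : ℕ∞) h) (hc : ContDiff ℝ (⊤ : ℕ∞) c)
    (hcpos : ∀ s, 0 < c s) (hγ₁ : 0 < γ₁)
    (hb : ∀ s, 0 < γ₁ * g s - h s ^ 2)
    (u θ : ℝ → ℝ → ℝ)
    (hu : ContDiff ℝ (⊤ : ℕ∞) (Function.uncurry u))
    (hθ : ContDiff ℝ (⊤ : ℕ∞) (Function.uncurry θ))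
    (hsupp : ∀ t : ℝ, 0 ≤ t → HasCompactSupport (fun x => u x t) ∧
      HasCompactSupport (fun x => pdx θ x t) ∧ HasCompactSupport (fun x => pdt θ x t))
    (heat : ∀ x t : ℝ, 0 ≤ t →
      pdt u x t = pdx (fun y s => g (θ y s) * pdx u y s + h (θ y s) * pdt θ y s) x t)
    (wave : ∀ x t : ℝ, 0 ≤ t →
      pdt (pdt θ) x t + γ₁ * pdt θ x t =
        c (θ x t) * pdx (fun y s => c (θ y s) * pdx θ y s) x t - h (θ x t) * pdx u x t)
    (E : ℝ → ℝ)
    (hE : ∀ t, E t = (1 / 2) * ∫ x : ℝ,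
      (pdt θ x t) ^ 2 + c (θ x t) ^ 2 * (pdx θ x t) ^ 2 + (u x t) ^ 2) :
    (∀ s t : ℝ, 0 ≤ s → s ≤ t → E t ≤ E s) ∧ ∀ t : ℝ, 0 ≤ t → E t ≤ E 0 := by
  have H : Sys γ₁ g h c u θ :=
    { hg := hg, hh := hh, hc := hc, cpos := hcpos, hu := hu, hθ := hθ, heat := heat, wave := wave
      gpos := fun s => by
        have h1 := hb s
        have h2 : 0 < γ₁ * g s := by nlinarith [sq_nonneg (h s)]
        exact (mul_pos_iff_of_pos_left hγ₁).1 h2 }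
  have hLB := all_LB H (fun t ht => exists_Wv (hsupp t ht))
  have main : ∀ s t : ℝ, 0 ≤ s → s ≤ t → E t ≤ E s := by
    intro s t hs hst
    obtain ⟨N, hN⟩ := LB.unif (u := u) (θ := θ) hs (q := t) (fun τ hτ => hLB τ (hs.trans hτ.1))
    rw [hE, hE]
    exact mul_le_mul_of_nonneg_left (energy_le H hγ₁ hb hs hst hN) (by norm_num)
  exact ⟨main, fun t ht => main 0 t le_rfl ht⟩
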